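/- arXiv:1511.04333 — 5 statements merged into one kernel-verified Lean document; each statement's English description precedes it below -/
import Mathlib

section
/- Let K be a field whose characteristic is 0 or a prime p ≠ 2, and let l ≥ 2. Then for any two K-subspaces U and V of the orthogonal Lie algebra so_{2l+1}(K) one has (4l−4)·codim [U,V] ≤ (5l−4)·(codim U + codim V), where codimensions are taken inside so_{2l+1}(K) (of dimension 2l²+l). -/
/-!
Write `a = codim U`, `b = codim V`, and let `W` be the orthogonal complement of `[U, V]` in `so_{2l+1}`
under the trace form, so that `codim [U, V] ≤ dim W`. For antisymmetric matrices
`tr (w [u, v]) = 2 tr (w u v)`; as the characteristic is not `2`, the trilinear form `tr (w u v)`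
vanishes on `W × U × V`. Two bounds then suffice:

* `dim W ≤ a + b + l`,
* if `W ≠ 0`, then `a + b ≥ 4l - 4`.

Indeed, for `W ≠ 0` they give
`(4l-4) dim W ≤ (4l-4)(a+b) + l (4l-4) ≤ (4l-4)(a+b) + l (a+b) = (5l-4)(a+b)`.

For the two bounds one may extend scalars to the algebraic closure and pass to the split form of
the orthogonal Lie algebra (`Frame.bounds`), where it is graded by the values of the roots at a
generic cocharacter of the torus. Replacing a subspace by the space of leading terms of its elements
keeps its dimension (`Frame.finrank_le`); the graded space consists of some root spaces and a subspace
of the Cartan subalgebra, and the vanishing of `tr (w u v)` becomes two combinatorial conditions: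

* `Frame.Ann.triangle`: no roots with matrix positions `(p, q)`, `(q, r)`, `(r, p)` are present in `W`,
  `U`, `V` respectively;
* `Frame.Ann.cartan`: if a root is present in one space and its negative in the next, then it vanishes
  on the Cartan part of the third.

Averaging over triangles gives the first bound (`Frame.Ann.finrank_add_le`). When `l = 2` there are no
triangles consisting of long roots, and the second condition has to compensate. For the second bound
(`Frame.Ann.finrank_add_le_of_ne_bot`), one leading term of a nonzero `W`, a root or a Cartan element,
already excludes sufficiently many roots from `U` and `V`.
-/

/-- The span of all brackets `⁅u, v⁆` with `u ∈ U`, `v ∈ V`. -/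
def bracketSpan {K L : Type*} [Field K] [LieRing L] [LieAlgebra K L]
    (U V : Submodule K L) : Submodule K L :=
  Submodule.span K {z | ∃ u ∈ U, ∃ v ∈ V, ⁅u, v⁆ = z}

/-- The codimension of a subspace `W` of `L`: `dim L - dim W`. -/
noncomputable def codim (K : Type*) {L : Type*} [Field K] [AddCommGroup L] [Module K L]
    (W : Submodule K L) : ℕ :=
  Module.finrank K L - Module.finrank K ↥W

section

open Finset
set_option linter.unusedSectionVars false

/-! ### Root combinatorics of type B -/

/-- Combinatorial model of the weights of the vector representation of `so_{2l+1}` in split form.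
The index set `ι` labels the weights `±ε_1, …, ±ε_l, 0`: the involution `σ` is negation of weights,
`o` is the zero weight, and `half` lists one weight out of each pair `±ε_a`. A matrix position
`(i, j)` has the weight `i - j`, and `deg` evaluates weights at a generic integral cocharacter.
Genericity is `deg_inj` together with `deg_sub`: two positions of the same nonzero degree either
agree or are exchanged by `(i, j) ↦ (σ j, σ i)`, so the degree of a root determines the root. -/
structure Frame (ι : Type*) [Fintype ι] (l : ℕ) where
  /-- Negation of weights. -/
  σ : ι → ι
  /-- The zero weight. -/
  o : ι
  /-- The value of a generic cocharacter. -/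
  deg : ι → ℤ
  /-- Representatives of the pairs of opposite nonzero weights. -/
  half : Fin l → ι
  inv : ∀ i, σ (σ i) = i
  fixed_iff : ∀ i, σ i = i ↔ i = o
  deg_neg : ∀ i, deg (σ i) = - deg i
  deg_inj : ∀ i j, deg i = deg j → i = j
  deg_sub : ∀ i j p q, deg i - deg j = deg p - deg q → p ≠ q →
    (i = p ∧ j = q) ∨ (i = σ q ∧ j = σ p)
  cover : ∀ i, i = o ∨ ∃ a, i = half a ∨ i = σ (half a)
  card : Fintype.card ι = 2 * l + 1

namespace Frame

variable {ι : Type*} [Fintype ι] [DecidableEq ι] {l : ℕ} (S : Frame ι l)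

/-- `Good i j` says that the position `(i, j)` carries a root: it is neither diagonal nor
antidiagonal. Each root occurs at exactly two positions, `(i, j)` and `(σ j, σ i)`. -/
def Good (i j : ι) : Prop := i ≠ j ∧ i ≠ S.σ j

/-- Positions of long roots `±ε_a ± ε_b`; the remaining good positions, with one index equal to
`o`, carry the short roots `±ε_a`. -/
def Long (i j : ι) : Prop := i ≠ S.o ∧ j ≠ S.o ∧ S.Good i j

instance : DecidableRel S.Good := fun i j => by unfold Good; infer_instance
instance : DecidableRel S.Long := fun i j => by unfold Long; infer_instance

lemma σ_o : S.σ S.o = S.o := (S.fixed_iff _).2 rfl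

lemma σ_ne_o {i : ι} (h : i ≠ S.o) : S.σ i ≠ S.o := by
  intro h'
  have := congrArg S.σ h'
  rw [S.inv, S.σ_o] at this
  exact h this

lemma σ_ne {i : ι} (h : i ≠ S.o) : S.σ i ≠ i := fun h' => h ((S.fixed_iff _).1 h')

lemma σ_eq_iff {i j : ι} : S.σ i = j ↔ i = S.σ j :=
  ⟨fun h => by rw [← h, S.inv], fun h => by rw [h, S.inv]⟩

lemma σ_inj {i j : ι} : S.σ i = S.σ j ↔ i = j := by rw [S.σ_eq_iff, S.inv]

lemma Good.symm {S : Frame ι l} {i j : ι} (h : S.Good i j) : S.Good j i :=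
  ⟨h.1.symm, fun h' => h.2 (by rw [h', S.inv])⟩

lemma Good.flip {S : Frame ι l} {i j : ι} (h : S.Good i j) : S.Good (S.σ j) (S.σ i) :=
  ⟨fun h' => h.1 (S.σ_inj.1 h').symm, fun h' => h.2 (by rw [h', S.inv])⟩

lemma Good.right {S : Frame ι l} {i j : ι} (h : S.Good i j) : S.Good i (S.σ j) :=
  ⟨h.2, by rw [S.inv]; exact h.1⟩

lemma Good.left {S : Frame ι l} {i j : ι} (h : S.Good i j) : S.Good (S.σ i) j :=
  h.symm.right.symm

lemma good_o_left {i : ι} (h : i ≠ S.o) : S.Good S.o i :=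
  ⟨h.symm, fun h' => S.σ_ne_o h h'.symm⟩

lemma good_o_right {i : ι} (h : i ≠ S.o) : S.Good i S.o := (S.good_o_left h).symm

lemma card_ne_o : (univ.filter fun i => i ≠ S.o).card = 2 * l := by
  rw [Finset.filter_ne', Finset.card_erase_of_mem (mem_univ _), Finset.card_univ, S.card]; rfl

lemma card_long {i : ι} (hi : i ≠ S.o) : (univ.filter fun j => S.Long i j).card = 2 * l - 2 := by
  have : (univ.filter fun j => S.Long i j) = ({S.o, i, S.σ i} : Finset ι)ᶜ := by
    ext j
    rw [mem_filter_univ]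
    simp only [mem_compl, mem_insert, mem_singleton, Long, Good]
    have := S.σ_eq_iff (i := i) (j := j)
    grind
  rw [this, Finset.card_compl, S.card, Finset.card_eq_three.2 ⟨S.o, i, S.σ i, hi.symm,
    (S.σ_ne_o hi).symm, (S.σ_ne hi).symm, rfl⟩]
  omega

lemma card_long_long {i j : ι} (h : S.Long i j) :
    (univ.filter fun k => S.Long j k ∧ S.Long k i).card = 2 * l - 4 := by
  obtain ⟨hi, hj, hij⟩ := h
  have : (univ.filter fun k => S.Long j k ∧ S.Long k i) =
      ({S.o, i, S.σ i, j, S.σ j} : Finset ι)ᶜ := by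
    ext k
    rw [mem_filter_univ]
    simp only [mem_compl, mem_insert, mem_singleton, Long, Good]
    have := S.σ_eq_iff (i := j) (j := k)
    grind
  have h5 : ({S.o, i, S.σ i, j, S.σ j} : Finset ι).card = 5 := by
    have h1 := S.σ_ne hi
    have h2 := S.σ_ne hj
    have h3 := S.σ_ne_o hi
    have h4 := S.σ_ne_o hj
    have h6 := S.σ_inj (i := i) (j := j)
    have h7 := S.σ_eq_iff (i := i) (j := j)
    have := hij.1
    have := hij.2
    rw [card_insert_of_notMem, card_insert_of_notMem, card_insert_of_notMem,
      card_insert_of_notMem, card_singleton] <;> simp only [mem_insert, mem_singleton] <;> grind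
  rw [this, Finset.card_compl, S.card, h5]
  omega

/-- Sum over the positions of long roots. -/
def longSum (a : ι → ι → ℕ) : ℕ := ∑ i, ∑ j, if S.Long i j then a i j else 0

/-- Sum over the positions of short roots. -/
def shortSum (a : ι → ι → ℕ) : ℕ := ∑ i ∈ univ.filter (fun i => i ≠ S.o), (a i S.o + a S.o i)

lemma longSum_add_shortSum_le (a : ι → ι → ℕ) :
    S.longSum a + S.shortSum a ≤ ∑ i, ∑ j, a i j := by
  have h : ∀ i j, (if S.Long i j then a i j else 0) + (if i ≠ S.o ∧ j = S.o then a i j else 0) +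
      (if i = S.o ∧ j ≠ S.o then a i j else 0) ≤ a i j := by
    intro i j
    unfold Long
    split_ifs <;> first | omega | grind
  have h2 : S.shortSum a = ∑ i, ∑ j, ((if i ≠ S.o ∧ j = S.o then a i j else 0) +
      (if i = S.o ∧ j ≠ S.o then a i j else 0)) := by
    simp only [shortSum, sum_add_distrib, sum_filter, ite_and]
    congr 1
    · refine sum_congr rfl fun i _ => ?_
      split_ifs <;> simp
    · simp
  rw [h2, longSum, ← sum_add_distrib]
  refine sum_le_sum fun i _ => ?_
  rw [← sum_add_distrib]
  refine sum_le_sum fun j _ => ?_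
  have := h i j
  omega

lemma longSum_one : S.longSum (fun _ _ => 1) = 2 * l * (2 * l - 2) := by
  have : ∀ i, (∑ j, if S.Long i j then 1 else 0) = if i ≠ S.o then 2 * l - 2 else 0 := by
    intro i
    rw [← sum_filter, sum_const, smul_eq_mul, mul_one]
    split_ifs with h
    · exact S.card_long h
    · rw [card_eq_zero, filter_eq_empty_iff]
      exact fun j _ hj => h hj.1
  simp only [longSum, this]
  rw [← sum_filter, sum_const, smul_eq_mul, S.card_ne_o]

lemma Long.symm {S : Frame ι l} {i j : ι} (h : S.Long i j) : S.Long j i := ⟨h.2.1, h.1, h.2.2.symm⟩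

lemma longSum_swap (a : ι → ι → ℕ) : S.longSum (fun i j => a j i) = S.longSum a := by
  unfold longSum
  rw [sum_comm]
  refine sum_congr rfl fun i _ => sum_congr rfl fun j _ => ?_
  simp only [show S.Long i j ↔ S.Long j i from ⟨Long.symm, Long.symm⟩]

lemma longSum_mono {a b : ι → ι → ℕ} (h : ∀ i j, S.Long i j → a i j ≤ b i j) :
    S.longSum a ≤ S.longSum b := by
  refine sum_le_sum fun i _ => sum_le_sum fun j _ => ?_
  split_ifs with hij
  · exact h i j hij
  · rfl

lemma longSum_add (a b : ι → ι → ℕ) :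
    S.longSum (fun i j => a i j + b i j) = S.longSum a + S.longSum b := by
  simp only [longSum, ← sum_add_distrib]
  refine sum_congr rfl fun i _ => sum_congr rfl fun j _ => ?_
  split_ifs <;> rfl

lemma longSum_left (a : ι → ℕ) : S.longSum (fun i _ => a i) =
    (2 * l - 2) * ∑ i ∈ univ.filter (fun i => i ≠ S.o), a i := by
  rw [longSum, mul_sum, sum_filter]
  refine sum_congr rfl fun i _ => ?_
  rw [← sum_filter, sum_const, smul_eq_mul]
  split_ifs with h
  · rw [S.card_long h]
  · rw [mul_eq_zero, card_eq_zero, filter_eq_empty_iff]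
    exact Or.inl fun j _ hj => h hj.1

lemma longSum_right (a : ι → ℕ) : S.longSum (fun _ j => a j) =
    (2 * l - 2) * ∑ i ∈ univ.filter (fun i => i ≠ S.o), a i := by
  rw [← S.longSum_left, ← S.longSum_swap]

/-- One of the three cyclic variants of the count over triangles `(i, j, o)`, whose sides are one
long and two short positions. -/
lemma ssl_one {a b c : ι → ι → ℕ}
    (h : ∀ p q r, S.Good p q → S.Good q r → S.Good r p → 1 ≤ a p q + b q r + c r p) :
    2 * l * (2 * l - 2) ≤ S.longSum a +
      (2 * l - 2) * ∑ i ∈ univ.filter (fun i => i ≠ S.o), (b i S.o + c S.o i) := by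
  rw [← longSum_one S, sum_add_distrib, mul_add, ← S.longSum_right, ← S.longSum_left,
    ← longSum_add, ← longSum_add]
  refine S.longSum_mono fun i j hij => ?_
  have := h i j S.o hij.2.2 (S.good_o_right hij.2.1) (S.good_o_left hij.1)
  omega

/-- If every triangle of good positions has a side counted by the respective function, summing over
all triangles with one vertex `o` bounds a weighted count from below. -/
lemma ssl {a b c : ι → ι → ℕ}
    (h : ∀ p q r, S.Good p q → S.Good q r → S.Good r p → 1 ≤ a p q + b q r + c r p) :
    3 * (2 * l * (2 * l - 2)) ≤ S.longSum a + S.longSum b + S.longSum c +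
      (2 * l - 2) * (S.shortSum a + S.shortSum b + S.shortSum c) := by
  have h1 := S.ssl_one h
  have h2 := S.ssl_one (a := b) (b := c) (c := a)
    fun p q r h1 h2 h3 => by have := h r p q h3 h1 h2; omega
  have h3 := S.ssl_one (a := c) (b := a) (c := b)
    fun p q r h1 h2 h3 => by have := h q r p h2 h3 h1; omega
  simp only [shortSum, sum_add_distrib] at *
  nlinarith

lemma sum_long_long (a : ι → ι → ℕ) :
    (∑ i, ∑ j, ∑ k, if S.Long i j ∧ S.Long j k ∧ S.Long k i then a i j else 0) =
      (2 * l - 4) * S.longSum a := by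
  simp only [longSum, mul_sum]
  refine sum_congr rfl fun i _ => sum_congr rfl fun j _ => ?_
  split_ifs with h
  · simp only [h, true_and]
    rw [← sum_filter, sum_const, smul_eq_mul, S.card_long_long h]
  · simp [h]

/-- The count over triangles all of whose sides are long. Each long position lies on `2l - 4` of
them, whence the need for `3 ≤ l`. -/
lemma lll {a b c : ι → ι → ℕ} (hl : 3 ≤ l)
    (h : ∀ p q r, S.Good p q → S.Good q r → S.Good r p → 1 ≤ a p q + b q r + c r p) :
    2 * l * (2 * l - 2) ≤ S.longSum a + S.longSum b + S.longSum c := by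
  refine Nat.le_of_mul_le_mul_left (c := 2 * l - 4) ?_ (by omega)
  have ha := S.sum_long_long a
  have hb : (∑ i, ∑ j, ∑ k, if S.Long i j ∧ S.Long j k ∧ S.Long k i then b j k else 0) =
      (2 * l - 4) * S.longSum b := by
    rw [← S.sum_long_long b, sum_comm]
    refine sum_congr rfl fun j _ => ?_
    rw [sum_comm]
    refine sum_congr rfl fun k _ => sum_congr rfl fun i _ => ?_
    congr 1
    exact propext ⟨fun h => ⟨h.2.1, h.2.2, h.1⟩, fun h => ⟨h.2.2, h.1, h.2.1⟩⟩
  have hc : (∑ i, ∑ j, ∑ k, if S.Long i j ∧ S.Long j k ∧ S.Long k i then c k i else 0) =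
      (2 * l - 4) * S.longSum c := by
    rw [← S.sum_long_long c, sum_congr rfl fun i _ => sum_comm, sum_comm]
    refine sum_congr rfl fun j _ => sum_congr rfl fun k _ => sum_congr rfl fun i _ => ?_
    congr 1
    exact propext ⟨fun h => ⟨h.2.2, h.1, h.2.1⟩, fun h => ⟨h.2.1, h.2.2, h.1⟩⟩
  rw [← S.longSum_one, ← S.sum_long_long, mul_add, mul_add, ← ha, ← hb, ← hc]
  simp only [← sum_add_distrib]
  refine sum_le_sum fun i _ => sum_le_sum fun j _ => sum_le_sum fun k _ => ?_
  split_ifs with hh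
  · exact h i j k hh.1.2.2 hh.2.1.2.2 hh.2.2.2.2
  · rfl

/-- A triple of functions covering all triangles has total mass at least `4l²`, the number of good
positions. This combines `lll` with weight `2l - 3` and `ssl` with weight `1`. -/
lemma count_large {a b c : ι → ι → ℕ} (hl : 3 ≤ l)
    (h : ∀ p q r, S.Good p q → S.Good q r → S.Good r p → 1 ≤ a p q + b q r + c r p) :
    4 * l ^ 2 ≤ (∑ i, ∑ j, a i j) + (∑ i, ∑ j, b i j) + ∑ i, ∑ j, c i j := by
  have h1 := S.lll hl h
  have h2 := S.ssl h
  have ha := S.longSum_add_shortSum_le a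
  have hb := S.longSum_add_shortSum_le b
  have hc := S.longSum_add_shortSum_le c
  obtain ⟨k, rfl⟩ : ∃ k, l = k + 2 := ⟨l - 2, by omega⟩
  have e : 2 * (k + 2) - 2 = 2 * k + 2 := by omega
  rw [e] at h1 h2
  have h3 : (2 * k + 2) * (4 * (k + 2) ^ 2) ≤
    (2 * k + 2) * (S.longSum a + S.longSum b + S.longSum c +
      (S.shortSum a + S.shortSum b + S.shortSum c)) := by
    generalize S.longSum a + S.longSum b + S.longSum c = L at *
    nlinarith
  have := Nat.le_of_mul_le_mul_left h3 (by omega)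
  omega

/-- Replacement for `count_large` at `l = 2`, where no triangle has three long sides. Here `z` plays
the role of the codimension of a subspace of the two-dimensional Cartan subalgebra; `h1` and `h2`
record that a root, respectively a pair of orthogonal long roots, forces this subspace to shrink. -/
lemma count_two {a b c : ι → ι → ℕ} {z : ℕ} (hl : l = 2)
    (h : ∀ p q r, S.Good p q → S.Good q r → S.Good r p → 1 ≤ a p q + b q r + c r p)
    (h1 : ∀ p q, S.Long p q → 1 ≤ a p q + b q p + z)
    (h2 : ∀ p q, S.Long p q → 1 ≤ a p q + b q p ∨ 1 ≤ a p (S.σ q) + b (S.σ q) p ∨ 2 ≤ z) :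
    4 * l ^ 2 ≤ (∑ i, ∑ j, a i j) + (∑ i, ∑ j, b i j) + (∑ i, ∑ j, c i j) + 2 * z := by
  have hs := S.ssl h
  have ha := S.longSum_add_shortSum_le a
  have hb := S.longSum_add_shortSum_le b
  have hc := S.longSum_add_shortSum_le c
  have hab := S.longSum_add a (fun i j => b j i)
  rw [S.longSum_swap b] at hab
  -- `j ↦ σ j` exchanges each long root with the long root orthogonal to it
  have hflip : S.longSum (fun i j => a i (S.σ j) + b (S.σ j) i) =
      S.longSum (fun i j => a i j + b j i) := by
    unfold longSum
    refine sum_congr rfl fun i _ => ?_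
    rw [← Equiv.sum_comp (Function.Involutive.toPerm S.σ S.inv)]
    refine sum_congr rfl fun j _ => ?_
    change (if S.Long i (S.σ j) then a i (S.σ (S.σ j)) + b (S.σ (S.σ j)) i else 0) = _
    rw [S.inv]
    congr 1
    exact propext ⟨fun h => ⟨h.1, by simpa [S.inv] using S.σ_ne_o h.2.1,
      by simpa [S.inv] using h.2.2.right⟩, fun h => ⟨h.1, S.σ_ne_o h.2.1, h.2.2.right⟩⟩
  have hone := S.longSum_one
  have key : S.longSum (fun _ _ => 2) ≤ S.longSum (fun i j => a i j + b j i) +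
      S.longSum (fun i j => a i (S.σ j) + b (S.σ j) i) + S.longSum (fun _ _ => z) := by
    rw [← longSum_add, ← longSum_add]
    refine S.longSum_mono fun i j hij => ?_
    have e1 := h1 i j hij
    have e2 := h2 i j hij
    have e3 := h1 i (S.σ j) ⟨hij.1, S.σ_ne_o hij.2.1, hij.2.2.right⟩
    omega
  have hconst : ∀ n, S.longSum (fun _ _ => n) = n * S.longSum (fun _ _ => 1) := by
    intro n
    simp only [longSum, mul_sum, mul_ite, mul_one, mul_zero]
  rw [hflip, hconst z, hconst 2, hone, hab] at key
  subst hl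
  norm_num at key hs ⊢
  omega

/-- If `f` is invariant under `(i, j) ↦ (σ j, σ i)` and `K` is stable under `σ`, then the positions in
`R × K` are counted twice in the total sum, the second time in `K × σ R`. -/
lemma sum_cross (f : ι → ι → ℕ) (hf : ∀ i j, f (S.σ j) (S.σ i) = f i j) (K R : Finset ι)
    (Q : Finset (ι × ι)) (hK : ∀ y ∈ K, S.σ y ∈ K) (hR : ∀ x ∈ R, x ∉ K)
    (hQ : ∀ x ∈ Q, x.1 ∉ K ∧ x.2 ∉ K) :
    2 * (∑ y ∈ K, ∑ x ∈ R, f x y) + ∑ x ∈ Q, f x.1 x.2 ≤ ∑ i, ∑ j, f i j := by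
  have h1 : (∑ y ∈ K, ∑ x ∈ R, f x y) = ∑ x ∈ R ×ˢ K, f x.1 x.2 := by
    rw [sum_product_right]
  have h2 : (∑ y ∈ K, ∑ x ∈ R, f x y) = ∑ x ∈ K ×ˢ (R.image S.σ), f x.1 x.2 := by
    rw [h1]
    refine sum_bij' (fun x _ => (S.σ x.2, S.σ x.1)) (fun x _ => (S.σ x.2, S.σ x.1)) ?_ ?_ ?_ ?_ ?_
    · rintro ⟨x, y⟩ h
      simp only [mem_product] at h
      simp only [mem_product]
      exact ⟨hK _ h.2, mem_image_of_mem _ h.1⟩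
    · rintro ⟨x, y⟩ h
      simp only [mem_product, mem_image] at h
      obtain ⟨h, z, hz, rfl⟩ := h
      simp only [mem_product, S.inv]
      exact ⟨hz, hK _ h⟩
    · rintro ⟨x, y⟩ _; simp [S.inv]
    · rintro ⟨x, y⟩ _; simp [S.inv]
    · rintro ⟨x, y⟩ _; exact (hf _ _).symm
  have hd1 : Disjoint (R ×ˢ K) (K ×ˢ (R.image S.σ)) := by
    rw [disjoint_left]
    rintro ⟨x, y⟩ h h'
    simp only [mem_product] at h h'
    exact hR _ h.1 h'.1
  have hd2 : Disjoint (R ×ˢ K ∪ K ×ˢ (R.image S.σ)) Q := by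
    rw [disjoint_left]
    rintro ⟨x, y⟩ h h'
    simp only [mem_union, mem_product] at h
    have := hQ _ h'
    tauto
  rw [two_mul]
  nth_rewrite 1 [h1]
  rw [h2, ← sum_union hd1, ← sum_union hd2, ← sum_product' univ univ f]
  exact sum_le_sum_of_subset fun x _ => by simp

/-- If all triangles on the side `(p, q)`, and all those on the equivalent side `(σ q, σ p)`, meet `b`
or `c` in another side, then `b` and `c` have total mass at least `8l - 12`, plus
twice their values at the opposite position `(q, p)`. -/
lemma count_root {b c : ι → ι → ℕ} (hb : ∀ i j, b (S.σ j) (S.σ i) = b i j)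
    (hc : ∀ i j, c (S.σ j) (S.σ i) = c i j) {p q : ι} (hpq : S.Good p q)
    (h1 : ∀ k, S.Good q k → S.Good k p → 1 ≤ b q k + c k p)
    (h2 : ∀ k, S.Good (S.σ p) k → S.Good k (S.σ q) → 1 ≤ b (S.σ p) k + c k (S.σ q)) :
    8 * l + 2 * (b q p + c q p) ≤ (∑ i, ∑ j, b i j) + (∑ i, ∑ j, c i j) + 12 := by
  set K : Finset ι := {p, q, S.σ p, S.σ q}ᶜ with hKdef
  have hpq1 := hpq.1
  have hpq2 := hpq.2
  have hmem : ∀ y, y ∈ K ↔ y ≠ p ∧ y ≠ q ∧ y ≠ S.σ p ∧ y ≠ S.σ q := by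
    intro y; simp [K]
  have hK : ∀ y ∈ K, S.σ y ∈ K := by
    intro y hy
    rw [hmem] at hy ⊢
    simp only [ne_eq, S.σ_eq_iff, S.inv]
    tauto
  have hcard : 2 * l ≤ K.card + 3 := by
    have : ({p, q, S.σ p, S.σ q} : Finset ι).card ≤ 4 := card_le_four
    have h' := card_compl ({p, q, S.σ p, S.σ q} : Finset ι)
    rw [S.card] at h'
    rw [hKdef, h']
    omega
  have hne : q ≠ S.σ p := hpq.symm.2
  have hQne : ((q, p) : ι × ι) ≠ (S.σ p, S.σ q) := fun h => hne (Prod.ext_iff.1 h).1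
  have cross : ∀ f : ι → ι → ℕ, (∀ i j, f (S.σ j) (S.σ i) = f i j) →
      2 * (∑ y ∈ K, (f q y + f (S.σ p) y)) + 2 * f q p ≤ ∑ i, ∑ j, f i j := by
    intro f hf
    have := S.sum_cross f hf K {q, S.σ p} {(q, p), (S.σ p, S.σ q)} hK
      (by simp [hmem]) (by simp [hmem])
    simp only [sum_pair hne, sum_pair hQne] at this
    have e := hf q p
    omega
  have e : ∑ y ∈ K, (c q y + c (S.σ p) y) = ∑ y ∈ K, (c y p + c y (S.σ q)) := by
    refine sum_bij' (fun x _ => S.σ x) (fun x _ => S.σ x) (fun x hx => hK x hx)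
      (fun x hx => hK x hx) (fun x _ => S.inv x) (fun x _ => S.inv x) fun x _ => ?_
    have e1 := hc q x
    have e2 := hc (S.σ p) x
    rw [S.inv] at e2
    omega
  have cb := cross b hb
  have cc := cross c hc
  rw [e] at cc
  have hsum : K.card * 2 ≤ ∑ y ∈ K, (b q y + b (S.σ p) y) + ∑ y ∈ K, (c y p + c y (S.σ q)) := by
    rw [← sum_add_distrib, ← smul_eq_mul, ← sum_const]
    refine sum_le_sum fun y hy => ?_
    rw [hmem] at hy
    have e1 := h1 y ⟨hy.2.1.symm, fun h => hy.2.2.2 (by rw [h, S.inv])⟩ ⟨hy.1, hy.2.2.1⟩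
    have e2 := h2 y ⟨hy.2.2.1.symm, fun h => hy.1 (S.σ_inj.1 h).symm⟩
      ⟨hy.2.2.2, by rw [S.inv]; exact hy.2.1⟩
    omega
  omega

/-- The analogue of `count_root` in which the fixed object is a Cartan element `x` with `x p ≠ 0`:
of the three values `x p`, `-x p` and `0`, at most one coincides with a given `x y`, so that `g` is
forced to be positive at two of `(p, y)`, `(σ p, y)`, `(o, y)`. -/
lemma count_cartan {g : ι → ι → ℕ} (hg : ∀ i j, g (S.σ j) (S.σ i) = g i j) {p : ι}
    (hp : p ≠ S.o) (h1 : 1 ≤ g p S.o) (h2 : 1 ≤ g (S.σ p) S.o)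
    (h3 : ∀ y, S.Long p y → 2 ≤ g p y + g (S.σ p) y + g S.o y) :
    8 * l ≤ (∑ i, ∑ j, g i j) + 4 := by
  have hcard := S.card_long hp
  have n1 := S.σ_ne hp
  have n2 := S.σ_ne_o hp
  have n3 := S.σ_o
  have hp1 : ¬ S.Long p p := fun h => h.2.2.1 rfl
  have hp2 : ¬ S.Long p (S.σ p) := fun h => h.2.2.2 (S.inv p).symm
  have hp3 : ¬ S.Long p S.o := fun h => h.2.1 rfl
  have := S.sum_cross g hg (univ.filter fun j => S.Long p j) {p, S.σ p, S.o}
    {(p, S.o), (S.σ p, S.o), (S.o, p), (S.o, S.σ p)} (by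
      intro y hy
      rw [mem_filter_univ] at hy ⊢
      exact ⟨hy.1, S.σ_ne_o hy.2.1, hy.2.2.right⟩)
    (by simp [hp1, hp2, hp3]) (by simp [hp1, hp2, hp3])
  rw [sum_insert (by simp; grind), sum_insert (by simp; grind),
    sum_insert (by simp; grind), sum_singleton] at this
  have e1 := hg p S.o
  have e2 := hg (S.σ p) S.o
  rw [S.σ_o] at e1 e2
  rw [S.inv] at e2
  have hsum : (univ.filter fun j => S.Long p j).card * 2 ≤
      ∑ y ∈ univ.filter fun j => S.Long p j, ∑ x ∈ {p, S.σ p, S.o}, g x y := by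
    rw [← smul_eq_mul, ← sum_const]
    refine sum_le_sum fun y hy => ?_
    rw [mem_filter_univ] at hy
    rw [sum_insert (by simp; grind), sum_insert (by simp; grind), sum_singleton]
    have := h3 y hy
    omega
  simp only at this
  omega

end Frame

/-! ### Leading terms -/

namespace Frame

variable {ι : Type*} [Fintype ι] [DecidableEq ι] {l : ℕ} (S : Frame ι l)
variable {F : Type*} [Field F]

/-- All elements of `W` belong to the split orthogonal Lie algebra defined by `σ`. -/
def Skew (W : Submodule F (Matrix ι ι F)) : Prop :=
  ∀ w ∈ W, ∀ i j, w i j = - w (S.σ j) (S.σ i)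

/-- The filtration of `W` by degree: the elements all of whose entries have degree at least `d`. -/
def fil (W : Submodule F (Matrix ι ι F)) (d : ℤ) : Submodule F (Matrix ι ι F) where
  carrier := {w | w ∈ W ∧ ∀ i j, S.deg i - S.deg j < d → w i j = 0}
  add_mem' := fun ha hb => ⟨W.add_mem ha.1 hb.1, fun i j h => by
    rw [Matrix.add_apply, ha.2 i j h, hb.2 i j h, add_zero]⟩
  zero_mem' := ⟨W.zero_mem, fun _ _ _ => rfl⟩
  smul_mem' := fun c _ ha => ⟨W.smul_mem c ha.1, fun i j h => by
    rw [Matrix.smul_apply, ha.2 i j h, smul_zero]⟩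

lemma mem_fil {W : Submodule F (Matrix ι ι F)} {d : ℤ} {w : Matrix ι ι F} :
    w ∈ S.fil W d ↔ w ∈ W ∧ ∀ i j, S.deg i - S.deg j < d → w i j = 0 := Iff.rfl

/-- The weight of the position `(i, j)` occurs as the lowest-degree term of an element of `W`. -/
def Pres (W : Submodule F (Matrix ι ι F)) (i j : ι) : Prop :=
  ∃ w ∈ S.fil W (S.deg i - S.deg j), w i j ≠ 0

/-- The degree-zero part of the associated graded space of `W`: the diagonals of elements of `W` of
nonnegative degree. It is a subspace of the Cartan subalgebra. -/
def dg (W : Submodule F (Matrix ι ι F)) : Submodule F (ι → F) :=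
  (S.fil W 0).map (Matrix.diagLinearMap ι F F)

open Classical in
/-- Indicator function of the good positions whose root is not a leading term of `W`. -/
noncomputable def miss (W : Submodule F (Matrix ι ι F)) (i j : ι) : ℕ :=
  if S.Good i j ∧ ¬ S.Pres W i j then 1 else 0

lemma mem_dg {W : Submodule F (Matrix ι ι F)} {h : ι → F} (hh : h ∈ S.dg W) :
    ∃ w ∈ S.fil W 0, ∀ i, h i = w i i := by
  obtain ⟨w, hw, rfl⟩ := Submodule.mem_map.1 hh
  exact ⟨w, hw, fun i => rfl⟩

lemma Pres.flip {S : Frame ι l} {W : Submodule F (Matrix ι ι F)} (hW : S.Skew W) {i j : ι}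
    (h : S.Pres W i j) : S.Pres W (S.σ j) (S.σ i) := by
  obtain ⟨w, hw, h0⟩ := h
  refine ⟨w, ?_, fun h => h0 ?_⟩
  · rw [S.deg_neg, S.deg_neg, neg_sub_neg]
    exact hw
  · rw [hW w hw.1, h, neg_zero]

lemma miss_flip {W : Submodule F (Matrix ι ι F)} (hW : S.Skew W) (i j : ι) :
    S.miss W (S.σ j) (S.σ i) = S.miss W i j := by
  unfold miss
  congr 1
  refine propext (and_congr ⟨fun h => ?_, fun h => h.flip⟩ (not_congr ⟨fun h => ?_,
    fun h => h.flip hW⟩))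
  · simpa [S.inv] using h.flip
  · simpa [S.inv] using h.flip hW

lemma pres_of_miss {W : Submodule F (Matrix ι ι F)} {i j : ι} (hg : S.Good i j)
    (h : S.miss W i j = 0) : S.Pres W i j := by
  unfold miss at h
  by_contra h'
  simp [hg, h'] at h

lemma finrank_le_map_add {E E₂ : Type*} [AddCommGroup E] [Module F E] [FiniteDimensional F E]
    [AddCommGroup E₂] [Module F E₂] (A B : Submodule F E) (φ : E →ₗ[F] E₂)
    (h : ∀ x ∈ A, φ x = 0 → x ∈ B) :
    Module.finrank F A ≤ Module.finrank F (A.map φ) + Module.finrank F B := by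
  have h1 := (φ.domRestrict A).finrank_range_add_finrank_ker
  rw [LinearMap.range_domRestrict] at h1
  have h2 : Module.finrank F (LinearMap.ker (φ.domRestrict A)) ≤ Module.finrank F B := by
    rw [← LinearMap.finrank_range_of_inj (f := A.subtype ∘ₗ (LinearMap.ker (φ.domRestrict A)).subtype)
      (by exact A.injective_subtype.comp (Submodule.injective_subtype _))]
    refine Submodule.finrank_mono ?_
    rintro _ ⟨⟨⟨x, hx⟩, hx'⟩, rfl⟩
    exact h x hx hx'
  omega

open Classical in
/-- Dimension of the degree-`d` part of the associated graded space of `W`, for skew `W`. -/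
noncomputable def grDim (W : Submodule F (Matrix ι ι F)) (d : ℤ) : ℕ :=
  if d = 0 then Module.finrank F (S.dg W) else
    if ∃ i j, S.deg i - S.deg j = d ∧ S.Pres W i j then 1 else 0

lemma fil_step {W : Submodule F (Matrix ι ι F)} (hW : S.Skew W) (d : ℤ) :
    Module.finrank F (S.fil W d) ≤ S.grDim W d + Module.finrank F (S.fil W (d + 1)) := by
  unfold grDim
  split_ifs with h0 hp
  · subst h0
    refine finrank_le_map_add (S.fil W 0) (S.fil W (0 + 1)) (Matrix.diagLinearMap ι F F)
      fun w hw h => ⟨hw.1, fun i j hij => ?_⟩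
    rcases lt_or_eq_of_le (Int.lt_add_one_iff.1 hij) with h' | h'
    · exact hw.2 i j h'
    · obtain rfl := S.deg_inj i j (by omega)
      exact congrFun h i
  · obtain ⟨p, q, rfl, hpq⟩ := hp
    refine (finrank_le_map_add (S.fil W (S.deg p - S.deg q)) (S.fil W (S.deg p - S.deg q + 1))
      (Matrix.entryLinearMap F F p q) fun w hw h => ⟨hw.1, fun i j hij => ?_⟩).trans ?_
    · rcases lt_or_eq_of_le (Int.lt_add_one_iff.1 hij) with h' | h'
      · exact hw.2 i j h'
      · have h : w p q = 0 := h
        rcases S.deg_sub i j p q h' (by rintro rfl; simp at h0) with ⟨rfl, rfl⟩ | ⟨rfl, rfl⟩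
        · exact h
        · rw [hW w hw.1, S.inv, S.inv, h, neg_zero]
    · have := Submodule.finrank_le ((S.fil W (S.deg p - S.deg q)).map (Matrix.entryLinearMap F F p q))
      rw [Module.finrank_self] at this
      omega
  · rw [zero_add]
    refine Submodule.finrank_mono fun w hw => ⟨hw.1, fun i j hij => ?_⟩
    rcases lt_or_eq_of_le (Int.lt_add_one_iff.1 hij) with h' | h'
    · exact hw.2 i j h'
    · by_contra hne
      exact hp ⟨i, j, h', w, by rw [h']; exact hw, hne⟩

lemma fil_sum {W : Submodule F (Matrix ι ι F)} (hW : S.Skew W) (d : ℤ) (n : ℕ) :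
    Module.finrank F (S.fil W d) ≤ (∑ k ∈ range n, S.grDim W (d + k)) +
      Module.finrank F (S.fil W (d + n)) := by
  induction n with
  | zero => rw [show d + ((0 : ℕ) : ℤ) = d by simp]; simp
  | succ n ih =>
    have := S.fil_step hW (d + n)
    rw [sum_range_succ, show d + ((n + 1 : ℕ) : ℤ) = d + n + 1 by push_cast; ring]
    omega

/-- There are `4l²` good positions, twice the number `2l²` of roots. -/
lemma good_card : (univ.filter fun x : ι × ι => S.Good x.1 x.2).card = 4 * l ^ 2 := by
  have h1 : ∀ i, (∑ j, if S.Good i j then 1 else 0) = if i = S.o then 2 * l else 2 * l - 1 := by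
    intro i
    rw [← sum_filter, sum_const, smul_eq_mul, mul_one]
    have : (univ.filter fun j => S.Good i j) = ({i, S.σ i} : Finset ι)ᶜ := by
      ext j
      rw [mem_filter_univ]
      simp only [mem_compl, mem_insert, mem_singleton, Good]
      have := S.σ_eq_iff (i := i) (j := j)
      grind
    rw [this, card_compl, S.card]
    split_ifs with h
    · rw [h, S.σ_o, pair_eq_singleton, card_singleton]
      omega
    · rw [card_pair (S.σ_ne h).symm]
      omega
  rw [card_filter, ← univ_product_univ, sum_product' univ univ fun i j => if S.Good i j then 1 else 0]
  simp only [h1]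
  rw [← add_sum_erase _ _ (mem_univ S.o), if_pos rfl, sum_congr rfl fun i hi => if_neg (ne_of_mem_erase hi),
    sum_const, card_erase_of_mem (mem_univ _), card_univ, S.card, smul_eq_mul]
  rcases l with _ | l
  · rfl
  · rw [show 2 * (l + 1) - 1 = 2 * l + 1 by omega, show 2 * (l + 1) + 1 - 1 = 2 * l + 2 by omega]
    ring

open Classical in
/-- The dimension of `W` is at most that of its associated graded space: the roots which are not missing,
each counted at two positions, and the Cartan part `dg W`. -/
lemma finrank_le (h2 : (2 : F) ≠ 0) {W : Submodule F (Matrix ι ι F)} (hW : S.Skew W) :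
    2 * Module.finrank F W + ∑ i, ∑ j, S.miss W i j ≤ 4 * l ^ 2 + 2 * Module.finrank F (S.dg W) := by
  obtain ⟨R, hR⟩ : ∃ R : ℕ, ∀ i j, |S.deg i - S.deg j| ≤ R := by
    refine ⟨∑ i, ∑ j, (S.deg i - S.deg j).natAbs, fun i j => ?_⟩
    have h1 : (S.deg i - S.deg j).natAbs ≤ ∑ j, (S.deg i - S.deg j).natAbs :=
      single_le_sum (f := fun j => (S.deg i - S.deg j).natAbs) (fun _ _ => Nat.zero_le _) (mem_univ j)
    have h2 : (∑ j, (S.deg i - S.deg j).natAbs) ≤ ∑ i, ∑ j, (S.deg i - S.deg j).natAbs :=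
      single_le_sum (f := fun i => ∑ j, (S.deg i - S.deg j).natAbs)
        (fun _ _ => Nat.zero_le _) (mem_univ i)
    rw [Int.abs_eq_natAbs]
    exact_mod_cast h1.trans h2
  have hfil := S.fil_sum hW (-R) (2 * R + 1)
  have e1 : S.fil W (-R) = W := by
    ext w
    rw [mem_fil, and_iff_left_iff_imp]
    intro _ i j hij
    have := abs_le.1 (hR i j)
    omega
  have e2 : S.fil W (-R + (2 * R + 1 : ℕ)) = ⊥ := by
    rw [eq_bot_iff]
    intro w hw
    rw [Submodule.mem_bot]
    ext i j
    refine hw.2 i j ?_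
    have := abs_le.1 (hR i j)
    push_cast
    omega
  rw [e1, e2, finrank_bot, add_zero] at hfil
  set P : Finset (ι × ι) := univ.filter fun x => S.Good x.1 x.2 ∧ S.Pres W x.1 x.2 with hP
  set D : Finset ℤ := P.image fun x => S.deg x.1 - S.deg x.2 with hD
  have hgr : ∀ d, S.grDim W d ≤ (if d = 0 then Module.finrank F (S.dg W) else 0) +
      if d ∈ D then 1 else 0 := by
    intro d
    unfold grDim
    split_ifs with h0 h1 h3 h1 h1 <;> try omega
    exfalso
    obtain ⟨i, j, rfl, hij⟩ := h3
    have hg : S.Good i j := ?_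
    · exact h1 (mem_image.2 ⟨(i, j), mem_filter.2 ⟨mem_univ _, hg, hij⟩, rfl⟩)
    constructor
    · rintro rfl; simp at h0
    · rintro rfl
      obtain ⟨w, hw, hne⟩ := hij
      have := hW w hw.1 (S.σ j) j
      rw [S.inv] at this
      have h' : 2 * w (S.σ j) j = 0 := by linear_combination this
      exact hne ((mul_eq_zero.1 h').resolve_left h2)
  have hsum : (∑ k ∈ range (2 * R + 1), S.grDim W (-R + k)) ≤
      Module.finrank F (S.dg W) + D.card := by
    have hinj : Set.InjOn (fun k : ℕ => (-R + k : ℤ)) (range (2 * R + 1)) := by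
      intro a _ b _ h
      simpa using h
    rw [← sum_image (f := S.grDim W) hinj]
    refine (sum_le_sum fun d _ => hgr d).trans ?_
    rw [sum_add_distrib]
    refine add_le_add ?_ ?_
    · rw [sum_ite_eq']
      split_ifs <;> simp
    · rw [← sum_filter, sum_const, smul_eq_mul, mul_one]
      exact card_le_card fun x hx => (mem_filter.1 hx).2
  -- every nonzero degree is attained at the two positions `(i, j)` and `(σ j, σ i)`
  have hcard : 2 * D.card ≤ P.card := by
    refine mul_card_image_le_card P 2 fun d hd => ?_
    obtain ⟨⟨i, j⟩, hx, rfl⟩ := mem_image.1 hd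
    obtain ⟨hg, hp⟩ := (mem_filter.1 hx).2
    have hne : ((i, j) : ι × ι) ≠ (S.σ j, S.σ i) := fun h => hg.2 (Prod.ext_iff.1 h).1
    rw [← card_pair hne]
    refine card_le_card fun x hx' => ?_
    rw [mem_insert, mem_singleton] at hx'
    rcases hx' with rfl | rfl
    · exact mem_filter.2 ⟨hx, rfl⟩
    · refine mem_filter.2 ⟨mem_filter.2 ⟨mem_univ _, hg.flip, hp.flip hW⟩, ?_⟩
      simp only [S.deg_neg]
      ring
  have hmiss : P.card + ∑ i, ∑ j, S.miss W i j = 4 * l ^ 2 := by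
    rw [← S.good_card, ← sum_product' univ univ (S.miss W), univ_product_univ]
    simp only [miss, ← sum_filter, sum_const, smul_eq_mul, mul_one]
    rw [hP, ← filter_filter, ← filter_filter, card_filter_add_card_filter_not]
  omega

end Frame

/-! ### Dimension bounds in the split algebra -/

namespace Frame

variable {ι : Type*} [Fintype ι] [DecidableEq ι] {l : ℕ} (S : Frame ι l)
variable {F : Type*} [Field F]

/-- Three subspaces of the split orthogonal Lie algebra on which `tr (w u v)` vanishes. -/
structure Ann (W U V : Submodule F (Matrix ι ι F)) : Prop where
  skewW : S.Skew W
  skewU : S.Skew U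
  skewV : S.Skew V
  trace_eq : ∀ w ∈ W, ∀ u ∈ U, ∀ v ∈ V, (w * u * v).trace = 0

variable {S} {W U V : Submodule F (Matrix ι ι F)}

lemma Ann.rot (h : S.Ann W U V) : S.Ann U V W :=
  ⟨h.skewU, h.skewV, h.skewW, fun u hu v hv w hw => by
    rw [← h.trace_eq w hw u hu v hv, Matrix.trace_mul_comm, mul_assoc]⟩

lemma trace_mul_mul (w u v : Matrix ι ι F) :
    (w * u * v).trace = ∑ i, ∑ j, ∑ k, w i j * u j k * v k i := by
  simp only [Matrix.trace, Matrix.diag, Matrix.mul_apply, sum_mul]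
  exact sum_congr rfl fun i _ => sum_comm

/-- In `tr (w u v)` with `w`, `u`, `v` of degrees at least `d`, `e`, `f` and `d + e + f = 0`, only the
entries of degree exactly `d`, `e`, `f` contribute, since the degrees around a triangle sum to zero. -/
lemma deg_eq {w u v : Matrix ι ι F} {d e f : ℤ} (hw : w ∈ S.fil W d) (hu : u ∈ S.fil U e)
    (hv : v ∈ S.fil V f) (hdef : d + e + f = 0) {i j k : ι} (h : w i j * u j k * v k i ≠ 0) :
    S.deg i - S.deg j = d ∧ S.deg j - S.deg k = e ∧ S.deg k - S.deg i = f := by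
  have h1 : ¬ S.deg i - S.deg j < d := fun h' => h (by rw [hw.2 i j h', zero_mul, zero_mul])
  have h2 : ¬ S.deg j - S.deg k < e := fun h' => h (by rw [hu.2 j k h', mul_zero, zero_mul])
  have h3 : ¬ S.deg k - S.deg i < f := fun h' => h (by rw [hv.2 k i h', mul_zero])
  omega

/-- Three roots around a triangle cannot all be leading terms: the leading entries contribute a
nonzero product to the trace, and no other triangle has the same degrees. -/
lemma Ann.triangle (h : S.Ann W U V) {p q r : ι} (hpq : S.Good p q) (hqr : S.Good q r)
    (hrp : S.Good r p) (h1 : S.Pres W p q) (h2 : S.Pres U q r) (h3 : S.Pres V r p) : False := by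
  obtain ⟨w, hw, hw0⟩ := h1
  obtain ⟨u, hu, hu0⟩ := h2
  obtain ⟨v, hv, hv0⟩ := h3
  have ht := h.trace_eq w hw.1 u hu.1 v hv.1
  have key : ∀ i j k, w i j * u j k * v k i ≠ 0 → i = p ∧ j = q ∧ k = r := by
    intro i j k hne
    obtain ⟨e1, e2, e3⟩ := deg_eq hw hu hv (by ring) hne
    have a1 := S.deg_sub _ _ _ _ e1 hpq.1
    have a2 := S.deg_sub _ _ _ _ e2 hqr.1
    have := hpq.2
    have := hrp.1
    have := S.σ_inj (i := p) (j := r)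
    have := hqr.2
    have := hpq.symm.2
    grind
  rw [trace_mul_mul, sum_eq_single p, sum_eq_single q, sum_eq_single r] at ht
  · exact mul_ne_zero (mul_ne_zero hw0 hu0) hv0 ht
  · intro k _ hk
    by_contra hne
    exact hk (key _ _ _ hne).2.2
  · simp
  · intro j _ hj
    refine sum_eq_zero fun k _ => ?_
    by_contra hne
    exact hj (key _ _ _ hne).2.1
  · simp
  · intro i _ hi
    refine sum_eq_zero fun j _ => sum_eq_zero fun k _ => ?_
    by_contra hne
    exact hi (key _ _ _ hne).1
  · simp

/-- If a root is a leading term of `W` and its negative one of `U`, then the root vanishes on the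
Cartan part of `V`. -/
lemma Ann.cartan (h : S.Ann W U V) {p q : ι} (hpq : S.Good p q)
    (h1 : S.Pres W p q) (h2 : S.Pres U q p) {x : ι → F} (hx : x ∈ S.dg V) : x p = x q := by
  obtain ⟨w, hw, hw0⟩ := h1
  obtain ⟨u, hu, hu0⟩ := h2
  obtain ⟨v, hv, hxv⟩ := S.mem_dg hx
  have ht := h.trace_eq w hw.1 u hu.1 v hv.1
  have key : ∀ i j k, w i j * u j k * v k i ≠ 0 →
      (i = p ∧ j = q ∧ k = p) ∨ (i = S.σ q ∧ j = S.σ p ∧ k = S.σ q) := by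
    intro i j k hne
    obtain ⟨e1, e2, e3⟩ := deg_eq hw hu hv (by ring) hne
    have a1 := S.deg_sub _ _ _ _ e1 hpq.1
    have a3 := S.deg_inj k i (by omega)
    grind
  have hne : p ≠ S.σ q := hpq.2
  rw [trace_mul_mul, ← sum_subset (subset_univ {p, S.σ q}), sum_pair hne,
    sum_eq_single q, sum_eq_single p, sum_eq_single (S.σ p), sum_eq_single (S.σ q)] at ht
  · rw [hxv, hxv]
    have e1 := h.skewW w hw.1 p q
    have e2 := h.skewU u hu.1 q p
    have e3 := h.skewV v hv.1 q q
    have : w p q * u q p * (v p p - v q q) = 0 := by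
      rw [e3, e1, e2]
      rw [e1, e2] at ht
      linear_combination ht
    exact sub_eq_zero.1 ((mul_eq_zero.1 this).resolve_left (mul_ne_zero hw0 hu0))
  · intro k _ hk
    by_contra hne'
    have := key _ _ _ hne'
    grind
  · simp
  · intro j _ hj
    refine sum_eq_zero fun k _ => ?_
    by_contra hne'
    have := key _ _ _ hne'
    grind
  · simp
  · intro k _ hk
    by_contra hne'
    have := key _ _ _ hne'
    grind
  · simp
  · intro j _ hj
    refine sum_eq_zero fun k _ => ?_
    by_contra hne'
    have := key _ _ _ hne'
    grind
  · simp
  · intro i _ hi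
    refine sum_eq_zero fun j _ => sum_eq_zero fun k _ => ?_
    by_contra hne'
    have := key _ _ _ hne'
    simp only [mem_insert, mem_singleton] at hi
    grind

/-- The Cartan subalgebra of the split orthogonal Lie algebra: diagonals odd under `σ`. -/
def oddFun (S : Frame ι l) (F : Type*) [Field F] : Submodule F (ι → F) where
  carrier := {x | ∀ i, x (S.σ i) = - x i}
  add_mem' := fun ha hb i => by rw [Pi.add_apply, Pi.add_apply, ha i, hb i, neg_add]
  zero_mem' := fun i => by simp
  smul_mem' := fun c x ha i => by rw [Pi.smul_apply, Pi.smul_apply, ha i, smul_neg]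

lemma odd_o (h2 : (2 : F) ≠ 0) {x : ι → F} (hx : x ∈ S.oddFun F) : x S.o = 0 := by
  have := hx S.o
  rw [S.σ_o] at this
  have h' : 2 * x S.o = 0 := by linear_combination this
  exact (mul_eq_zero.1 h').resolve_left h2

lemma finrank_oddFun (h2 : (2 : F) ≠ 0) : Module.finrank F (S.oddFun F) ≤ l := by
  have := LinearMap.finrank_le_finrank_of_injective
    (f := (LinearMap.funLeft F F S.half) ∘ₗ (S.oddFun F).subtype) (by
      rw [← LinearMap.ker_eq_bot, LinearMap.ker_eq_bot']
      rintro ⟨x, hx⟩ h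
      have h : ∀ a, x (S.half a) = 0 := fun a => congrFun h a
      ext i
      change x i = 0
      rcases S.cover i with rfl | ⟨a, rfl | rfl⟩
      · exact odd_o h2 hx
      · exact h a
      · rw [hx, h, neg_zero])
  simpa using this

lemma dg_le (hW : S.Skew W) : S.dg W ≤ S.oddFun F := by
  intro x hx i
  obtain ⟨w, hw, hxw⟩ := S.mem_dg hx
  rw [hxw, hxw, hW w hw.1, S.inv]

lemma finrank_dg (h2 : (2 : F) ≠ 0) (hW : S.Skew W) : Module.finrank F (S.dg W) ≤ l :=
  (Submodule.finrank_mono (dg_le hW)).trans (finrank_oddFun h2)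

/-- A Cartan part annihilated by a root is proper, because every root is nonzero on the Cartan
subalgebra. -/
lemma finrank_dg_lt (h2 : (2 : F) ≠ 0) (hW : S.Skew W) {p q : ι} (hpq : S.Good p q)
    (h : ∀ x ∈ S.dg W, x p = x q) : Module.finrank F (S.dg W) < l := by
  refine (Submodule.finrank_lt_finrank_of_lt (lt_of_le_of_ne (dg_le hW) fun he => ?_)).trans_le
    (finrank_oddFun h2)
  rw [he] at h
  have hmem : ∀ r, r ≠ S.o → (fun i => if i = r then (1 : F) else if i = S.σ r then -1 else 0) ∈
      S.oddFun F := by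
    intro r hr i
    have := S.σ_ne hr
    have := S.σ_eq_iff (i := i) (j := r)
    have := S.σ_inj (i := i) (j := r)
    simp only
    split_ifs <;> first | simp; done | grind
  have := hpq.1
  have := hpq.2
  have := hpq.symm.2
  by_cases hp : p = S.o
  · have := h _ (hmem q (by rw [← hp]; exact hpq.1.symm))
    grind
  · have := h _ (hmem p hp)
    grind

lemma Ann.miss_triangle (h : S.Ann W U V) (p q r : ι) (hpq : S.Good p q) (hqr : S.Good q r)
    (hrp : S.Good r p) : 1 ≤ S.miss W p q + S.miss U q r + S.miss V r p := by
  by_contra hlt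
  exact h.triangle hpq hqr hrp (S.pres_of_miss hpq (by omega)) (S.pres_of_miss hqr (by omega))
    (S.pres_of_miss hrp (by omega))

lemma Ann.miss_cartan (h : S.Ann W U V) (h2 : (2 : F) ≠ 0) {p q : ι} (hpq : S.Good p q) :
    1 ≤ S.miss W p q + S.miss U q p + (l - Module.finrank F (S.dg V)) := by
  by_contra hlt
  have := finrank_dg_lt h2 h.skewV hpq fun x hx => h.cartan hpq
    (S.pres_of_miss hpq (by omega)) (S.pres_of_miss hpq.symm (by omega)) hx
  omega

/-- For `l = 2` two orthogonal long roots `±ε_1 ± ε_2` span the dual of the Cartan subalgebra, so if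
both are present with their negatives then the Cartan part of `V` is zero. -/
lemma Ann.miss_two (h : S.Ann W U V) (h2 : (2 : F) ≠ 0) (hl : l = 2) {p q : ι}
    (hpq : S.Long p q) :
    1 ≤ S.miss W p q + S.miss U q p ∨ 1 ≤ S.miss W p (S.σ q) + S.miss U (S.σ q) p ∨
      2 ≤ l - Module.finrank F (S.dg V) := by
  by_contra! hlt
  obtain ⟨e1, e2, e3⟩ := hlt
  have hg := hpq.2.2
  have hcov : ∀ i, i = S.o ∨ i = p ∨ i = S.σ p ∨ i = q ∨ i = S.σ q := by
    have h0 := S.card_long_long hpq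
    rw [show 2 * l - 4 = 0 by omega, card_eq_zero, filter_eq_empty_iff] at h0
    intro i
    have := h0 (mem_univ i)
    by_contra! hne
    refine this ⟨⟨hpq.2.1, hne.1, hne.2.2.2.1.symm, ?_⟩, hne.1, hpq.1, hne.2.1, hne.2.2.1⟩
    intro h'
    exact hne.2.2.2.2 (by rw [h', S.inv])
  have hbot : S.dg V = ⊥ := by
    rw [eq_bot_iff]
    intro x hx
    have hodd := dg_le h.skewV hx
    have a1 := h.cartan hg (S.pres_of_miss hg (by omega)) (S.pres_of_miss hg.symm (by omega)) hx
    have a2 := h.cartan hg.right (S.pres_of_miss hg.right (by omega))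
      (S.pres_of_miss hg.right.symm (by omega)) hx
    rw [hodd] at a2
    have hp : x p = 0 := by
      have h' : 2 * x p = 0 := by linear_combination a1 + a2
      exact (mul_eq_zero.1 h').resolve_left h2
    rw [Submodule.mem_bot]
    ext i
    rw [Pi.zero_apply]
    rcases hcov i with rfl | rfl | rfl | rfl | rfl
    · exact odd_o h2 hodd
    · exact hp
    · rw [hodd, hp, neg_zero]
    · rw [← a1, hp]
    · rw [hodd, ← a1, hp, neg_zero]
  rw [hbot, finrank_bot] at e3
  omega

/-- The total dimension of three subspaces with `tr (w u v) = 0` exceeds `2 dim so_{2l+1}` by at most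
`l`: each triangle misses a root of one of them. -/
theorem Ann.finrank_add_le (h : S.Ann W U V) (h2 : (2 : F) ≠ 0) (hl : 2 ≤ l) :
    Module.finrank F W + Module.finrank F U + Module.finrank F V ≤ 4 * l ^ 2 + 3 * l := by
  have hW := S.finrank_le h2 h.skewW
  have hU := S.finrank_le h2 h.skewU
  have hV := S.finrank_le h2 h.skewV
  have dW := finrank_dg h2 h.skewW
  have dU := finrank_dg h2 h.skewU
  have dV := finrank_dg h2 h.skewV
  rcases Nat.lt_or_ge 2 l with hl3 | hl2
  · have := S.count_large hl3 h.miss_triangle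
    omega
  · have := S.count_two (by omega) h.miss_triangle (fun p q hpq => h.miss_cartan h2 hpq.2.2)
      (fun p q hpq => h.miss_two h2 (by omega) hpq)
    omega

/-- A nonzero `W` forces `codim U + codim V ≥ 4l - 4`. The leading term of an element of `W` is
either a root (`count_root`) or a Cartan element (`count_cartan`). -/
theorem Ann.finrank_add_le_of_ne_bot (h : S.Ann W U V) (h2 : (2 : F) ≠ 0)
    (hne : W ≠ ⊥) :
    Module.finrank F U + Module.finrank F V + 4 * l ≤ 2 * (2 * l ^ 2 + l) + 4 := by
  have hU := S.finrank_le h2 h.skewU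
  have hV := S.finrank_le h2 h.skewV
  have dU := finrank_dg h2 h.skewU
  have dV := finrank_dg h2 h.skewV
  by_cases hpres : ∃ p q, S.Good p q ∧ S.miss W p q = 0
  · obtain ⟨p, q, hpq, h0⟩ := hpres
    have h0' : S.miss W (S.σ q) (S.σ p) = 0 := by rw [S.miss_flip h.skewW, h0]
    have hc := S.count_root (S.miss_flip h.skewU) (S.miss_flip h.skewV) hpq
      (fun k h1 h3 => by have := h.miss_triangle p q k hpq h1 h3; omega)
      (fun k h1 h3 => by have := h.miss_triangle (S.σ q) (S.σ p) k hpq.flip h1 h3; omega)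
    have e1 := h.miss_cartan h2 hpq
    have e2 := h.rot.rot.miss_cartan h2 hpq.symm
    omega
  · push Not at hpres
    have hdg : S.dg W ≠ ⊥ := by
      intro hbot
      have hW := S.finrank_le h2 h.skewW
      have : (univ.filter fun x : ι × ι => S.Good x.1 x.2).card ≤ ∑ i, ∑ j, S.miss W i j := by
        rw [← sum_product' univ univ (S.miss W), univ_product_univ, card_filter]
        refine sum_le_sum fun x _ => ?_
        split_ifs with hx
        · exact Nat.one_le_iff_ne_zero.2 (hpres _ _ hx)
        · exact Nat.zero_le _
      rw [S.good_card] at this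
      rw [hbot, finrank_bot] at hW
      exact hne (Submodule.finrank_eq_zero.1 (by omega))
    obtain ⟨x, hx, hx0⟩ := Submodule.exists_mem_ne_zero_of_ne_bot hdg
    obtain ⟨p, hp⟩ := Function.ne_iff.1 hx0
    rw [Pi.zero_apply] at hp
    have hodd := dg_le h.skewW hx
    have ho := odd_o h2 hodd
    have hpo : p ≠ S.o := by rintro rfl; exact hp ho
    have hg : ∀ i j, S.Good i j → x i ≠ x j → 1 ≤ S.miss U i j + S.miss V j i := by
      intro i j hij hne
      by_contra hlt
      exact hne (h.rot.cartan hij (S.pres_of_miss hij (by omega))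
        (S.pres_of_miss hij.symm (by omega)) hx)
    have hc := S.count_cartan (g := fun i j => S.miss U i j + S.miss V j i)
      (fun i j => by simp only [S.miss_flip h.skewU, S.miss_flip h.skewV]) hpo
      (hg _ _ (S.good_o_right hpo) (by rw [ho]; exact hp))
      (hg _ _ (S.good_o_right (S.σ_ne_o hpo)) (by rw [ho, hodd, neg_ne_zero]; exact hp))
      (by
        intro y hy
        have e1 := hg p y hy.2.2
        have e2 := hg (S.σ p) y hy.2.2.left
        have e3 := hg S.o y (S.good_o_left hy.2.1)
        rw [hodd] at e2
        rw [ho] at e3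
        by_cases c1 : x p = x y
        · have d2 := e2 (fun h' => hp (by
            have h' : 2 * x p = 0 := by linear_combination c1 - h'
            exact (mul_eq_zero.1 h').resolve_left h2))
          have d3 := e3 (by rw [← c1]; exact hp.symm)
          omega
        · have d1 := e1 c1
          by_cases c2 : 0 = x y
          · have d2 := e2 (by rw [← c2, neg_ne_zero]; exact hp)
            omega
          · have d3 := e3 c2
            omega)
    have hsum : (∑ i, ∑ j, (S.miss U i j + S.miss V j i)) =
        (∑ i, ∑ j, S.miss U i j) + ∑ i, ∑ j, S.miss V i j := by
      simp only [sum_add_distrib]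
      congr 1
      exact sum_comm
    rw [hsum] at hc
    omega

end Frame

/-! ### The standard frame -/

namespace Frame

/-- Uniqueness of the representation of `0` in base `9` with digits between `-4` and `4`. -/
lemma digits_eq_zero : ∀ (l : ℕ) (c : Fin l → ℤ), (∀ a, |c a| ≤ 4) →
    ∑ a, c a * 9 ^ (a : ℕ) = 0 → ∀ a, c a = 0
  | 0, _, _, _, a => a.elim0
  | l + 1, c, hc, h, a => by
    rw [Fin.sum_univ_succ] at h
    have h9 : ∑ a : Fin l, c a.succ * 9 ^ ((a.succ : Fin (l+1)) : ℕ)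
        = 9 * ∑ a : Fin l, c a.succ * 9 ^ (a : ℕ) := by
      rw [Finset.mul_sum]
      refine Finset.sum_congr rfl fun a _ => ?_
      rw [Fin.val_succ, pow_succ]; ring
    rw [h9] at h
    simp only [Fin.val_zero, pow_zero, mul_one] at h
    have h0 := abs_le.1 (hc 0)
    have hs : ∑ a : Fin l, c a.succ * 9 ^ (a : ℕ) = 0 := by omega
    have ih := digits_eq_zero l (fun a => c a.succ) (fun a => hc _) hs
    refine Fin.cases ?_ ih a
    rw [hs] at h
    omega

/-- The weights `ε_a`, `-ε_a` and `0` in coordinates. -/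
def weight {l : ℕ} : (Fin l ⊕ Fin l) ⊕ Unit → Fin l → ℤ
  | .inl (.inl a), c => if c = a then 1 else 0
  | .inl (.inr a), c => if c = a then -1 else 0
  | .inr _, _ => 0

/-- The index of the opposite weight. -/
def flipIdx {l : ℕ} : (Fin l ⊕ Fin l) ⊕ Unit → (Fin l ⊕ Fin l) ⊕ Unit
  | .inl (.inl a) => .inl (.inr a)
  | .inl (.inr a) => .inl (.inl a)
  | .inr u => .inr u

lemma weight_flipIdx {l : ℕ} (i : (Fin l ⊕ Fin l) ⊕ Unit) (c : Fin l) :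
    weight (flipIdx i) c = - weight i c := by
  rcases i with (a | a) | a <;> simp only [weight, flipIdx] <;> (try split_ifs) <;> simp

lemma abs_weight_le {l : ℕ} (i : (Fin l ⊕ Fin l) ⊕ Unit) (c : Fin l) : |weight i c| ≤ 1 := by
  rcases i with (a | a) | a <;> simp only [weight] <;> (try split_ifs) <;> simp

/-- The only coincidences among sums of two weights are the trivial ones: reordering, and sums of
opposite weights being zero. -/
lemma weight_add {l : ℕ} (x y z t : (Fin l ⊕ Fin l) ⊕ Unit)
    (h : ∀ c, weight x c + weight y c = weight z c + weight t c) :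
    (x = z ∧ y = t) ∨ (x = t ∧ y = z) ∨ (y = flipIdx x ∧ t = flipIdx z) := by
  rcases x with (x | x) | x <;> rcases y with (y | y) | y <;> rcases z with (z | z) | z <;>
    rcases t with (t | t) | t <;> simp only [weight] at h <;>
    simp only [flipIdx, Sum.inl.injEq, Sum.inr.injEq, reduceCtorEq, false_and, and_false,
      or_false, false_or] <;>
    first
    | (have h1 := h x; have h2 := h y; have h3 := h z; have h4 := h t; grind)
    | (have h1 := h x; have h2 := h y; have h3 := h z; grind)
    | (have h1 := h x; have h2 := h y; have h4 := h t; grind)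
    | (have h1 := h x; have h3 := h z; have h4 := h t; grind)
    | (have h2 := h y; have h3 := h z; have h4 := h t; grind)
    | (have h1 := h x; have h2 := h y; grind)
    | (have h1 := h x; have h2 := h z; grind)
    | (have h1 := h x; have h2 := h t; grind)
    | (have h1 := h y; have h2 := h z; grind)
    | (have h1 := h y; have h2 := h t; grind)
    | (have h1 := h z; have h2 := h t; grind)
    | (have h1 := h x; grind)
    | (have h1 := h y; grind)
    | (have h1 := h z; grind)
    | (have h1 := h t; grind)
    | simp

/-- The frame of `so_{2l+1}`. The cocharacter sends `ε_a` to `9 ^ a`; it separates differences of two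
roots, as these have coordinates of absolute value at most `4`. -/
def stdFrame (l : ℕ) : Frame ((Fin l ⊕ Fin l) ⊕ Unit) l where
  σ := flipIdx
  o := .inr ()
  deg i := ∑ a, weight i a * 9 ^ (a : ℕ)
  half a := .inl (.inl a)
  inv i := by rcases i with (a | a) | a <;> rfl
  fixed_iff i := by rcases i with (a | a) | a <;> simp [flipIdx]
  deg_neg i := by simp [weight_flipIdx]
  deg_inj i j h := by
    have h' := digits_eq_zero l (fun a => weight i a - weight j a)
      (fun a => by
        have h1 := abs_le.1 (abs_weight_le i a)
        have h2 := abs_le.1 (abs_weight_le j a)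
        exact abs_le.2 ⟨by omega, by omega⟩)
      (by simp only [sub_mul, Finset.sum_sub_distrib]; linarith)
    have := weight_add i i j j (fun c => by have := h' c; omega)
    rcases this with h | h | h
    · exact h.1
    · exact h.1
    · rcases i with (a | a) | a <;> rcases j with (b | b) | b <;> simp [flipIdx] at h ⊢
  deg_sub i j p q h hpq := by
    have h' := digits_eq_zero l (fun a => weight i a - weight j a - (weight p a - weight q a))
      (fun a => by
        have h1 := abs_le.1 (abs_weight_le i a)
        have h2 := abs_le.1 (abs_weight_le j a)
        have h3 := abs_le.1 (abs_weight_le p a)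
        have h4 := abs_le.1 (abs_weight_le q a)
        exact abs_le.2 ⟨by omega, by omega⟩)
      (by simp only [sub_mul, Finset.sum_sub_distrib]; linarith)
    have := weight_add i q p j (fun c => by have := h' c; omega)
    rcases this with h | h | h
    · exact Or.inl ⟨h.1, h.2.symm⟩
    · exact absurd h.2.symm hpq
    · refine Or.inr ⟨?_, h.2⟩
      rw [h.1]
      rcases i with (a | a) | a <;> rfl
  cover i := by
    rcases i with (a | a) | a
    · exact Or.inr ⟨a, Or.inl rfl⟩
    · exact Or.inr ⟨a, Or.inr rfl⟩
    · exact Or.inl rfl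
  card := by simp; ring

end Frame

/-! ### Passage to the split form -/

namespace Frame
open Matrix

/-- Gram matrix of the split symmetric bilinear form `x_1 y_{l+1} + x_{l+1} y_1 + ⋯ + x_o y_o`; it is the
permutation matrix of `flipIdx`. -/
def splitForm (l : ℕ) (F : Type*) [Field F] :
    Matrix ((Fin l ⊕ Fin l) ⊕ Unit) ((Fin l ⊕ Fin l) ⊕ Unit) F :=
  fromBlocks (fromBlocks 0 1 1 0) 0 0 1

variable {l : ℕ} {F : Type*} [Field F]

lemma splitForm_transpose : (splitForm l F)ᵀ = splitForm l F := by
  simp [splitForm, fromBlocks_transpose]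

lemma splitForm_mul_self : splitForm l F * splitForm l F = 1 := by
  simp [splitForm, fromBlocks_multiply]

lemma splitForm_apply (i j : (Fin l ⊕ Fin l) ⊕ Unit) :
    splitForm l F i j = if flipIdx i = j then 1 else 0 := by
  rcases i with (a | a) | a <;> rcases j with (b | b) | b <;>
    simp [splitForm, flipIdx, Matrix.one_apply]

lemma splitForm_mul_mul_apply (m : Matrix ((Fin l ⊕ Fin l) ⊕ Unit) ((Fin l ⊕ Fin l) ⊕ Unit) F)
    (i j : (Fin l ⊕ Fin l) ⊕ Unit) :
    (splitForm l F * m * splitForm l F) i j = m (flipIdx i) (flipIdx j) := by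
  have h (i j : (Fin l ⊕ Fin l) ⊕ Unit) : flipIdx i = j ↔ flipIdx j = i :=
    ⟨fun h => by rw [← h]; exact (stdFrame l).inv i, fun h => by rw [← h]; exact (stdFrame l).inv j⟩
  simp only [Matrix.mul_apply, splitForm_apply, h _ j]
  simp

/-- Over a field containing a square root `r` of `-1`, the standard form is equivalent to the split
form: the isotropic pairs are `e + r f` and `(e - r f) / 2`. -/
lemma exists_change_of_form (h2 : (2 : F) ≠ 0) (r : F) (hr : r * r = -1) :
    ∃ P : Matrix (Fin (2 * l + 1)) ((Fin l ⊕ Fin l) ⊕ Unit) F,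
      P * (splitForm l F * Pᵀ) = 1 := by
  let A : Matrix (Fin l ⊕ Fin l) (Fin l ⊕ Fin l) F :=
    fromBlocks 1 ((2⁻¹ : F) • 1) (r • 1) ((-(r * 2⁻¹)) • 1)
  let P₀ : Matrix ((Fin l ⊕ Fin l) ⊕ Unit) ((Fin l ⊕ Fin l) ⊕ Unit) F := fromBlocks A 0 0 1
  have hP : P₀ * (splitForm l F * P₀ᵀ) = 1 := by
    have hA : A * ((fromBlocks 0 1 1 0 : Matrix (Fin l ⊕ Fin l) (Fin l ⊕ Fin l) F) * Aᵀ) = 1 := by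
      have h1 : (2⁻¹ : F) + 2⁻¹ = 1 := by field_simp; norm_num
      simp only [A]
      rw [fromBlocks_transpose, fromBlocks_multiply, fromBlocks_multiply, ← fromBlocks_one]
      congr 1 <;> ext a b <;> by_cases hab : a = b <;> simp [Matrix.one_apply, hab]
      · exact h1
      · ring
      · linear_combination (-2⁻¹ - 2⁻¹) * hr + h1
    simp only [P₀, splitForm]
    rw [fromBlocks_transpose, fromBlocks_multiply, fromBlocks_multiply, ← fromBlocks_one]
    simp only [transpose_zero, Matrix.mul_zero, Matrix.zero_mul, add_zero, zero_add, hA,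
      transpose_one, Matrix.mul_one]
  let e : Fin (2 * l + 1) ≃ (Fin l ⊕ Fin l) ⊕ Unit :=
    Fintype.equivOfCardEq (by simp; ring)
  refine ⟨P₀.submatrix e id, ?_⟩
  have : P₀.submatrix e id * (splitForm l F * (P₀.submatrix e id)ᵀ)
      = (P₀ * (splitForm l F * P₀ᵀ)).submatrix e e := by
    ext i j
    simp [Matrix.mul_apply]
  rw [this, hP, Matrix.submatrix_one_equiv]

/-- The map `x ↦ Q x P`, a change of basis if `P Q = 1`. -/
def conj {n ι : Type*} [Fintype n] [Fintype ι] (Q : Matrix ι n F) (P : Matrix n ι F) :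
    Matrix n n F →ₗ[F] Matrix ι ι F where
  toFun x := Q * x * P
  map_add' x y := by rw [Matrix.mul_add, Matrix.add_mul]
  map_smul' c x := by simp

lemma conj_injective {n ι : Type*} [Fintype n] [DecidableEq n] [Fintype ι] {Q : Matrix ι n F}
    {P : Matrix n ι F} (h : P * Q = 1) : Function.Injective (conj Q P) := by
  intro x y hxy
  have key (x : Matrix n n F) : P * (conj Q P x) * Q = x := by
    change P * (Q * x * P) * Q = x
    calc P * (Q * x * P) * Q = (P * Q) * x * (P * Q) := by simp only [Matrix.mul_assoc]
      _ = x := by rw [h, Matrix.one_mul, Matrix.mul_one]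
  rw [← key x, hxy, key]

lemma trace_conj {n ι : Type*} [Fintype n] [DecidableEq n] [Fintype ι] {Q : Matrix ι n F}
    {P : Matrix n ι F} (h : P * Q = 1) (x y z : Matrix n n F) :
    (conj Q P x * conj Q P y * conj Q P z).trace = (x * y * z).trace := by
  change (Q * x * P * (Q * y * P) * (Q * z * P)).trace = _
  have : Q * x * P * (Q * y * P) * (Q * z * P) = Q * (x * (P * Q) * y * (P * Q) * z * P) := by
    simp only [Matrix.mul_assoc]
  rw [this, Matrix.trace_mul_comm, h]
  simp only [Matrix.mul_assoc, h, Matrix.mul_one]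

lemma conj_skew {n : Type*} [Fintype n] (P : Matrix n ((Fin l ⊕ Fin l) ⊕ Unit) F)
    {x : Matrix n n F} (hx : xᵀ = -x) (i j : (Fin l ⊕ Fin l) ⊕ Unit) :
    conj (splitForm l F * Pᵀ) P x i j = - conj (splitForm l F * Pᵀ) P x (flipIdx j) (flipIdx i) := by
  set m := conj (splitForm l F * Pᵀ) P x with hm
  have key : mᵀ = -(splitForm l F * m * splitForm l F) := by
    have h0 : m = splitForm l F * (Pᵀ * x * P) := by
      rw [hm]
      change splitForm l F * Pᵀ * x * P = _
      simp only [Matrix.mul_assoc]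
    rw [h0, ← Matrix.mul_assoc (splitForm l F) (splitForm l F), splitForm_mul_self,
      Matrix.one_mul, Matrix.transpose_mul, splitForm_transpose, Matrix.transpose_mul,
      Matrix.transpose_mul, hx, Matrix.transpose_transpose]
    simp only [Matrix.mul_assoc, Matrix.neg_mul, Matrix.mul_neg]
  have := congrFun (congrFun key j) i
  rw [Matrix.neg_apply, splitForm_mul_mul_apply] at this
  exact this

section Extend
variable {K n : Type*} [Field K] [Algebra K F] [Fintype n]

/-- Extension of scalars of a space of matrices. -/
def extend (F : Type*) [Field F] [Algebra K F] (W : Submodule K (Matrix n n K)) :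
    Submodule F (Matrix n n F) :=
  Submodule.span F (Set.image (fun w : Matrix n n K => w.map (algebraMap K F)) W)

lemma finrank_le_extend (W : Submodule K (Matrix n n K)) :
    Module.finrank K W ≤ Module.finrank F (extend F W) := by
  let b := Module.finBasis K W
  let L : Matrix n n K ≃ₗ[K] (n × n → K) := (LinearEquiv.curry K K n n).symm
  let L' : Matrix n n F ≃ₗ[F] (n × n → F) := (LinearEquiv.curry F F n n).symm
  have h1 : LinearIndependent K (fun i => L (b i : Matrix n n K)) :=
    (b.linearIndependent.map' W.subtype (Submodule.ker_subtype W)).map' L.toLinearMap L.ker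
  have h2 := (linearIndependent_algebraMap_comp_iff (S := F)).2 h1
  have h3 : LinearIndependent F (fun i => (b i : Matrix n n K).map (algebraMap K F)) :=
    LinearIndependent.of_comp L'.toLinearMap h2
  have h4 : LinearIndependent F (fun i => (⟨(b i : Matrix n n K).map (algebraMap K F),
      Submodule.subset_span ⟨_, (b i).2, rfl⟩⟩ : extend F W)) :=
    LinearIndependent.of_comp (extend F W).subtype h3
  simpa using h4.fintype_card_le_finrank

lemma extend_transpose {W : Submodule K (Matrix n n K)} (hW : ∀ w ∈ W, wᵀ = -w) :
    ∀ w ∈ extend F W, wᵀ = -w := by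
  intro w hw
  induction hw using Submodule.span_induction with
  | mem x hx =>
    obtain ⟨w, hw, rfl⟩ := hx
    ext i j
    have := congrFun (congrFun (hW w hw) i) j
    rw [Matrix.transpose_apply, Matrix.neg_apply] at this
    simp [this]
  | zero => simp
  | add x y _ _ hx hy => rw [Matrix.transpose_add, hx, hy, neg_add]
  | smul c x _ hx => rw [Matrix.transpose_smul, hx, smul_neg]

lemma extend_trace {W U V : Submodule K (Matrix n n K)}
    (h : ∀ w ∈ W, ∀ u ∈ U, ∀ v ∈ V, (w * u * v).trace = 0) :
    ∀ w ∈ extend F W, ∀ u ∈ extend F U, ∀ v ∈ extend F V, (w * u * v).trace = 0 := by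
  intro w hw u hu v hv
  induction hw using Submodule.span_induction with
  | zero => simp
  | add x y _ _ hx hy => simp [Matrix.add_mul, hx, hy]
  | smul c x _ hx => simp [hx]
  | mem w hw =>
  induction hu using Submodule.span_induction with
  | zero => simp
  | add x y _ _ hx hy => simp [Matrix.add_mul, Matrix.mul_add, hx, hy]
  | smul c x _ hx => simp [hx]
  | mem u hu =>
  induction hv using Submodule.span_induction with
  | zero => simp
  | add x y _ _ hx hy => simp [Matrix.mul_add, hx, hy]
  | smul c x _ hx => simp [hx]
  | mem v hv =>
  obtain ⟨w, hw, rfl⟩ := hw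
  obtain ⟨u, hu, rfl⟩ := hu
  obtain ⟨v, hv, rfl⟩ := hv
  simp only [← Matrix.map_mul]
  rw [← AddMonoidHom.map_trace, h w hw u hu v hv, map_zero]
end Extend

/-- The two dimension bounds for spaces of antisymmetric matrices, deduced from the split case over
the algebraic closure. -/
theorem bounds {K : Type*} [Field K] (hl : 2 ≤ l) (h2 : (2 : K) ≠ 0)
    (W U V : Submodule K (Matrix (Fin (2 * l + 1)) (Fin (2 * l + 1)) K))
    (hW : ∀ w ∈ W, wᵀ = -w) (hU : ∀ w ∈ U, wᵀ = -w) (hV : ∀ w ∈ V, wᵀ = -w)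
    (h : ∀ w ∈ W, ∀ u ∈ U, ∀ v ∈ V, (w * u * v).trace = 0) :
    Module.finrank K W + Module.finrank K U + Module.finrank K V ≤ 4 * l ^ 2 + 3 * l ∧
    (W ≠ ⊥ → Module.finrank K U + Module.finrank K V + 4 * l ≤ 2 * (2 * l ^ 2 + l) + 4) := by
  let F := AlgebraicClosure K
  have h2F : (2 : F) ≠ 0 := by
    have := (map_ne_zero (algebraMap K F)).2 h2
    rwa [map_ofNat] at this
  obtain ⟨r, hr⟩ := IsAlgClosed.exists_pow_nat_eq (-1 : F) (n := 2) (by norm_num)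
  obtain ⟨P, hP⟩ := exists_change_of_form (l := l) h2F r (by rw [← hr, sq])
  let φ := conj (splitForm l F * Pᵀ) P
  have hφ : Function.Injective φ := conj_injective hP
  have hle (A : Submodule K (Matrix (Fin (2 * l + 1)) (Fin (2 * l + 1)) K)) :
      Module.finrank K A ≤ Module.finrank F ((extend F A).map φ) := by
    rw [(Submodule.equivMapOfInjective φ hφ (extend F A)).symm.finrank_eq]
    exact finrank_le_extend A
  have hskew (A : Submodule K (Matrix (Fin (2 * l + 1)) (Fin (2 * l + 1)) K))
      (hA : ∀ w ∈ A, wᵀ = -w) : (stdFrame l).Skew ((extend F A).map φ) := by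
    rintro _ ⟨w, hw, rfl⟩ i j
    exact conj_skew P (extend_transpose hA w hw) i j
  have hann : (stdFrame l).Ann ((extend F W).map φ) ((extend F U).map φ) ((extend F V).map φ) :=
    { skewW := hskew W hW
      skewU := hskew U hU
      skewV := hskew V hV
      trace_eq := by
        rintro _ ⟨w, hw, rfl⟩ _ ⟨u, hu, rfl⟩ _ ⟨v, hv, rfl⟩
        rw [trace_conj hP]
        exact extend_trace h w hw u hu v hv }
  have hw := hle W
  have hu := hle U
  have hv := hle V
  refine ⟨?_, fun hne => ?_⟩
  · have := hann.finrank_add_le h2F hl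
    omega
  · have hne' : (extend F W).map φ ≠ ⊥ := by
      intro h0
      rw [h0, finrank_bot, Nat.le_zero, Submodule.finrank_eq_zero] at hw
      exact hne hw
    have := hann.finrank_add_le_of_ne_bot h2F hne'
    omega

end Frame

end

/-! ### Antisymmetric matrices and the trace form -/

section
open Matrix LieAlgebra.Orthogonal

lemma finrank_so_ge (K : Type*) [Field K] (l : ℕ) :
    2 * l ^ 2 + l ≤ Module.finrank K (so (Fin (2 * l + 1)) K) := by
  -- `g c` is the strictly upper triangular matrix with entries `c`, and `f c = g c - (g c)ᵀ`
  let g (c : (Σ j : Fin (2 * l + 1), Fin (j : ℕ)) → K) :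
      Matrix (Fin (2 * l + 1)) (Fin (2 * l + 1)) K :=
    Matrix.of fun i j => if h : (i : ℕ) < j then c ⟨j, ⟨i, h⟩⟩ else 0
  let f : ((Σ j : Fin (2 * l + 1), Fin (j : ℕ)) → K) →ₗ[K] so (Fin (2 * l + 1)) K :=
    { toFun := fun c => ⟨g c - (g c)ᵀ, by rw [mem_so]; simp⟩
      map_add' := fun c d => by
        have h : g (c + d) = g c + g d := by
          ext i j
          simp only [g, Matrix.add_apply, Matrix.of_apply, Pi.add_apply]
          split_ifs <;> simp
        apply Subtype.ext
        change g (c + d) - (g (c + d))ᵀ = (g c - (g c)ᵀ) + (g d - (g d)ᵀ)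
        rw [h, Matrix.transpose_add]
        abel
      map_smul' := fun a c => by
        have h : g (a • c) = a • g c := by
          ext i j
          simp only [g, Matrix.smul_apply, Matrix.of_apply, Pi.smul_apply]
          split_ifs <;> simp
        apply Subtype.ext
        change g (a • c) - (g (a • c))ᵀ = a • (g c - (g c)ᵀ)
        rw [h, Matrix.transpose_smul, smul_sub] }
  have hf : Function.Injective f := by
    intro c d h
    funext ⟨j, i, hij⟩
    have := congrFun (congrFun (congrArg Subtype.val h) ⟨i, hij.trans j.2⟩) j
    change g c _ _ - g c _ _ = g d _ _ - g d _ _ at this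
    simp only [g, Matrix.of_apply, dif_pos hij, dif_neg hij.not_gt, sub_zero] at this
    exact this
  have h1 := LinearMap.finrank_le_finrank_of_injective hf
  rw [Module.finrank_fintype_fun_eq_card] at h1
  refine le_trans ?_ h1
  rw [Fintype.card_sigma]
  simp only [Fintype.card_fin]
  rw [Fin.sum_univ_eq_sum_range (fun j => j), Finset.sum_range_id]
  have : (2 * l + 1) * (2 * l + 1 - 1) / 2 = 2 * l ^ 2 + l := by
    rw [Nat.add_sub_cancel]
    apply Nat.div_eq_of_eq_mul_left (by norm_num)
    ring
  rw [this]

lemma trace_mul_bracket {K n : Type*} [Field K] [Fintype n] {w u v : Matrix n n K}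
    (hw : wᵀ = -w) (hu : uᵀ = -u) (hv : vᵀ = -v) :
    (w * (u * v - v * u)).trace = 2 * (w * u * v).trace := by
  have h : (w * (v * u)).trace = - (w * u * v).trace := by
    rw [← Matrix.trace_transpose (w * (v * u)), Matrix.transpose_mul, Matrix.transpose_mul,
      hw, hu, hv, Matrix.mul_assoc w, Matrix.trace_mul_comm w]
    simp
  rw [Matrix.mul_sub, Matrix.trace_sub, h, ← Matrix.mul_assoc]
  ring

end

theorem stmt5 (K : Type*) [Field K] (l : ℕ) (hl : 2 ≤ l)
    (hchar : ringChar K = 0 ∨ (Nat.Prime (ringChar K) ∧ ringChar K ≠ 2))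
    (U V : Submodule K ↥(LieAlgebra.Orthogonal.so (Fin (2 * l + 1)) K)) :
    (4 * l - 4) * codim K (bracketSpan U V) ≤
      (5 * l - 4) * (codim K U + codim K V) := by
  have h2 : (2 : K) ≠ 0 := by
    intro h
    have hd : ringChar K ∣ 2 := ringChar.dvd (by exact_mod_cast h)
    rcases hchar with h0 | ⟨hp, hne⟩
    · rw [h0] at hd
      omega
    · exact hne ((Nat.prime_dvd_prime_iff_eq hp Nat.prime_two).1 hd)
  let L := LieAlgebra.Orthogonal.so (Fin (2 * l + 1)) K
  -- the kernel of `T` is the orthogonal complement of `[U, V]` under the trace form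
  let T : L →ₗ[K] Module.Dual K (bracketSpan U V) :=
    LinearMap.mk₂ K (fun w z => (w.1 * z.1.1).trace)
      (fun w w' z => by simp [Matrix.add_mul]) (fun c w z => by simp)
      (fun w z z' => by simp [Matrix.mul_add]) (fun c w z => by simp)
  have hT : Module.finrank K L ≤
      Module.finrank K (LinearMap.ker T) + Module.finrank K (bracketSpan U V) := by
    have h := LinearMap.finrank_range_add_finrank_ker T
    have h' := Submodule.finrank_le (LinearMap.range T)
    rw [Subspace.dual_finrank_eq] at h'
    omega
  let ψ : L →ₗ[K] Matrix (Fin (2 * l + 1)) (Fin (2 * l + 1)) K :=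
    { toFun := Subtype.val, map_add' := fun _ _ => rfl, map_smul' := fun _ _ => rfl }
  have hψ : Function.Injective ψ := Subtype.val_injective
  let M (A : Submodule K L) : Submodule K (Matrix (Fin (2 * l + 1)) (Fin (2 * l + 1)) K) :=
    A.map ψ
  have hM (A : Submodule K L) : Module.finrank K (M A) = Module.finrank K A :=
    (Submodule.equivMapOfInjective ψ hψ A).symm.finrank_eq
  have hskew (A : Submodule K L) : ∀ w ∈ M A, w.transpose = -w := by
    rintro _ ⟨w, -, rfl⟩
    exact (LieAlgebra.Orthogonal.mem_so _ _ _).1 w.2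
  have htr : ∀ w ∈ M (LinearMap.ker T), ∀ u ∈ M U, ∀ v ∈ M V, (w * u * v).trace = 0 := by
    intro w hw u hu v hv
    have e := trace_mul_bracket (hskew _ w hw) (hskew _ u hu) (hskew _ v hv)
    obtain ⟨w, hw, rfl⟩ := hw
    obtain ⟨u, hu, rfl⟩ := hu
    obtain ⟨v, hv, rfl⟩ := hv
    have h0 : T w ⟨⁅u, v⁆, Submodule.subset_span ⟨u, hu, v, hv, rfl⟩⟩ = 0 := by
      rw [LinearMap.mem_ker.1 hw, LinearMap.zero_apply]
    have h1 : (w.1 * (u.1 * v.1 - v.1 * u.1)).trace = 0 := h0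
    rw [show (w.1 * (u.1 * v.1 - v.1 * u.1)).trace = _ from e] at h1
    exact (mul_eq_zero.1 h1).resolve_left h2
  have hb := Frame.bounds hl h2 _ _ _ (hskew _) (hskew _) (hskew _) htr
  simp only [hM] at hb
  have hN := finrank_so_ge K l
  have hU := Submodule.finrank_le U
  have hV := Submodule.finrank_le V
  change 2 * l ^ 2 + l ≤ Module.finrank K L at hN
  unfold codim
  change (4 * l - 4) * (Module.finrank K L - _) ≤
    (5 * l - 4) * (Module.finrank K L - _ + (Module.finrank K L - _))
  generalize hw : Module.finrank K (LinearMap.ker T) = w at *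
  by_cases hker : LinearMap.ker T = ⊥
  · have : w = 0 := by rw [← hw, hker, finrank_bot]
    have h0 : Module.finrank K L - Module.finrank K (bracketSpan U V) = 0 := by omega
    rw [h0, mul_zero]
    exact Nat.zero_le _
  · have hne : M (LinearMap.ker T) ≠ ⊥ := by
      intro h
      apply hker
      rw [← Submodule.finrank_eq_zero (R := K), ← hM, h, finrank_bot]
    have hb1 := hb.1
    have hb2 := hb.2 hne
    generalize Module.finrank K L = N at *
    generalize Module.finrank K (bracketSpan U V) = d at *
    generalize Module.finrank K U = a at *
    generalize Module.finrank K V = b at *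
    obtain ⟨k, rfl⟩ : ∃ k, l = k + 1 := ⟨l - 1, by omega⟩
    set s := N - a + (N - b) with hs
    have h1 : N - d ≤ s + (k + 1) := by omega
    have h3 : 4 * k ≤ s := by omega
    have e1 : 4 * (k + 1) - 4 = 4 * k := by omega
    have e2 : 5 * (k + 1) - 4 = 5 * k + 1 := by omega
    rw [e1, e2]
    -- `(4l-4)(s + l) ≤ (5l-4) s` amounts to `4l - 4 ≤ s`
    calc 4 * k * (N - d) ≤ 4 * k * (s + (k + 1)) := Nat.mul_le_mul_left _ h1
      _ = 4 * k * s + 4 * k * (k + 1) := by ring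
      _ ≤ 4 * k * s + s * (k + 1) := by gcongr
      _ = (5 * k + 1) * s := by ring
end

section
/- Let K be a field and n ≥ 3. Then for every element x of sl_n(K) that does not lie in the centre of sl_n(K), the centralizer satisfies dim_K c(x) ≤ (n−1)². -/
/-!
Let `A` be a non-scalar endomorphism of an `n`-dimensional space `V`, `n ≥ 3`, and `C` the space of
endomorphisms commuting with `A`. Choose `v` with `v`, `A v` independent and put `W = ⟨v, A v⟩`.
An element of `C` that kills a vector `u` also kills `A u`, so the elements of `C` killing a few
well-chosen vectors factor through a small quotient of `V` (`finrank_le_of_eval`).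

* If `A² v ∉ W`, or if `W` is `A`-stable and `A` is not a scalar on `V ⧸ W`, then `C` is determined
  by the values on `n - 2` vectors of a basis, so `dim C ≤ n (n - 2)`.
* Otherwise `A` induces a scalar `a` on `V ⧸ W`. An element of `C` killing `v` kills `W`, hence the
  range of `A - a`, hence takes values in `ker (A - a)`. So `dim C ≤ n + (n - 2) dim ker (A - a)`,
  which is at most `(n - 1)²` if `dim ker (A - a) ≤ n - 2`, and is `(n - 1)² + 1` if
  `dim ker (A - a) = n - 1`.

In this last case `A - a` has rank one, and since `n ≥ 3` there is `u ∈ ker (A - a)` outside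
`range (A - a)`; a rank-one map `φ ⊗ u` with `φ` zero on `range (A - a)` and `φ u ≠ 0` commutes
with `A` and has nonzero trace. So the trace-zero part of `C` is a proper subspace, and the missing
one dimension is gained.
-/

/-- The centralizer of an element of a Lie algebra, as a subspace. -/
def lieCentralizer (K : Type*) {L : Type*} [Field K] [LieRing L] [LieAlgebra K L]
    (x : L) : Submodule K L :=
  LinearMap.ker (LieAlgebra.ad K L x)

open Module

/-- The endomorphisms of `V` commuting with `A`. -/
def commutant {K V : Type*} [Field K] [AddCommGroup V] [Module K V] (A : V →ₗ[K] V) :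
    Submodule K (V →ₗ[K] V) where
  carrier := {y | ∀ u, y (A u) = A (y u)}
  add_mem' := by
    intro y z hy hz u
    simp [hy u, hz u]
  zero_mem' := by
    intro u
    simp
  smul_mem' := by
    intro c y hy u
    simp [hy u]

section

variable {K V : Type*} [Field K] [AddCommGroup V] [Module K V]

lemma mem_commutant {A y : V →ₗ[K] V} : y ∈ commutant A ↔ ∀ u, y (A u) = A (y u) := Iff.rfl

lemma exists_eq_smul_one_of_mem_span {A : V →ₗ[K] V} (h : ∀ v, A v ∈ K ∙ v) :
    ∃ a : K, A = a • 1 := by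
  apply LinearMap.exists_eq_smul_id_of_forall_notLinearIndependent
  intro v hv
  obtain ⟨c, hc⟩ := Submodule.mem_span_singleton.1 (h v)
  have := (LinearIndependent.pair_iff.1 hv) c (-1) (by rw [hc]; simp)
  simp at this

variable [FiniteDimensional K V]

/-- Dimension count behind all the bounds: if the elements of `C` in the kernel of `e` vanish on
`W` and take values in `k`, they inject into `Hom(V ⧸ W, k)`. -/
lemma finrank_le_of_eval {E : Type*} [AddCommGroup E] [Module K E] [FiniteDimensional K E]
    (C : Submodule K (V →ₗ[K] V)) (e : (V →ₗ[K] V) →ₗ[K] E) (W k : Submodule K V)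
    (h : ∀ y ∈ C, e y = 0 → (∀ w ∈ W, y w = 0) ∧ ∀ u, y u ∈ k) :
    finrank K C ≤ finrank K E + (finrank K V - finrank K W) * finrank K k := by
  have h1 := LinearMap.finrank_range_add_finrank_ker (e.domRestrict C)
  have h2 : finrank K (LinearMap.range (e.domRestrict C)) ≤ finrank K E :=
    Submodule.finrank_le _
  have h3 : finrank K (LinearMap.ker (e.domRestrict C)) ≤ finrank K ((V ⧸ W) →ₗ[K] k) := by
    let F : LinearMap.ker (e.domRestrict C) →ₗ[K] ((V ⧸ W) →ₗ[K] k) :=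
      { toFun := fun y => W.liftQ
          (LinearMap.codRestrict k y.1.1 (h y.1.1 y.1.2 (LinearMap.mem_ker.1 y.2)).2)
          (fun w hw => LinearMap.mem_ker.2
            (Subtype.ext ((h y.1.1 y.1.2 (LinearMap.mem_ker.1 y.2)).1 w hw)))
        map_add' := by
          intro y z
          ext u
          rfl
        map_smul' := by
          intro c y
          ext u
          rfl }
    refine LinearMap.finrank_le_finrank_of_injective (f := F) ?_
    intro y z hyz
    ext u
    have := congrArg (fun g => ((g (W.mkQ u) : k) : V)) hyz
    exact this
  rw [finrank_linearMap] at h3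
  have h4 := W.finrank_quotient_add_finrank
  have h5 : finrank K (V ⧸ W) = finrank K V - finrank K W := by omega
  rw [h5] at h3
  omega

/-- If the kernel of `A - a` has larger dimension than its range, the commutant of `A` is not
contained in the trace-zero endomorphisms. -/
lemma exists_trace_ne_zero {A : V →ₗ[K] V} {a : K}
    (h : finrank K (LinearMap.range (A - a • 1)) < finrank K (LinearMap.ker (A - a • 1))) :
    ∃ y ∈ commutant A, LinearMap.trace K V y ≠ 0 := by
  obtain ⟨u, hu, hu'⟩ : ∃ u ∈ LinearMap.ker (A - a • 1), u ∉ LinearMap.range (A - a • 1) := by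
    by_contra! hcon
    exact absurd (Submodule.finrank_mono (show _ ≤ _ from hcon)) (by omega)
  obtain ⟨φ, hφ, hφ'⟩ := Submodule.exists_le_ker_of_notMem hu'
  refine ⟨φ.smulRight u, ?_, by rwa [LinearMap.trace_smulRight]⟩
  intro w
  have h1 : A u = a • u := by simpa [sub_eq_zero] using hu
  have h2 : φ (A w) = a * φ w := by
    have : φ ((A - a • 1) w) = 0 := hφ' ⟨w, rfl⟩
    simpa [sub_eq_zero] using this
  simp [h1, h2, smul_smul, mul_comm]

/-- If `A - a` maps `V` into the cyclic subspace `⟨v, A v⟩`, then elements of the commutant killing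
`v` factor through `V ⧸ ⟨v, A v⟩` and take values in `ker (A - a)`. -/
lemma finrank_commutant_le_of_scalar_quotient {A : V →ₗ[K] V} {a : K} {v : V} {W : Submodule K V}
    (hW : W = (K ∙ v) ⊔ (K ∙ A v)) (h : ∀ u, (A - a • 1) u ∈ W) :
    finrank K (commutant A) ≤
      finrank K V + (finrank K V - finrank K W) * finrank K (LinearMap.ker (A - a • 1)) := by
  refine finrank_le_of_eval (commutant A) (LinearMap.applyₗ v) W _ ?_
  intro y hy hyv
  have hyv : y v = 0 := hyv
  have hyW : W ≤ LinearMap.ker y := by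
    rw [hW]
    simp [Submodule.span_singleton_le_iff_mem, hyv, hy v]
  refine ⟨fun w hw => hyW hw, fun u => ?_⟩
  have : y ((A - a • 1) u) = 0 := hyW (h u)
  simpa [hy u] using this

lemma finrank_traceless_commutant_le (hn : 3 ≤ finrank K V) {A : V →ₗ[K] V}
    (hA : ∀ a : K, A ≠ a • 1) :
    finrank K (commutant A ⊓ LinearMap.ker (LinearMap.trace K V) : Submodule K (V →ₗ[K] V))
      ≤ (finrank K V - 1) ^ 2 := by
  obtain ⟨v, hv⟩ : ∃ v, A v ∉ K ∙ v := by
    by_contra! hcon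
    obtain ⟨a, ha⟩ := exists_eq_smul_one_of_mem_span hcon
    exact hA a ha
  have hv0 : v ≠ 0 := by
    rintro rfl
    simp at hv
  obtain ⟨W, hW⟩ : ∃ W, W = (K ∙ v) ⊔ (K ∙ A v) := ⟨_, rfl⟩
  have hWdim : finrank K W = 2 := by
    rw [hW, Submodule.finrank_sup_span_singleton hv, finrank_span_singleton hv0]
  have hvW : v ∈ W := hW ▸ Submodule.mem_sup_left (Submodule.mem_span_singleton_self v)
  have hAvW : A v ∈ W := hW ▸ Submodule.mem_sup_right (Submodule.mem_span_singleton_self _)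
  have hle : finrank K (commutant A ⊓ LinearMap.ker (LinearMap.trace K V) :
      Submodule K (V →ₗ[K] V)) ≤ finrank K (commutant A) := Submodule.finrank_mono inf_le_left
  have htop : finrank K (⊤ : Submodule K V) = finrank K V := finrank_top K V
  have hkill : ∀ y ∈ commutant A, y v = 0 → W ≤ LinearMap.ker y := by
    intro y hy hyv
    rw [hW]
    simp [Submodule.span_singleton_le_iff_mem, hyv, hy v]
  by_cases h2 : A (A v) ∈ W
  swap
  · have hdim := Submodule.finrank_sup_span_singleton h2
    have := finrank_le_of_eval (commutant A) (LinearMap.applyₗ v) (W ⊔ K ∙ A (A v)) ⊤ (by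
      intro y hy hyv
      have hyv : y v = 0 := hyv
      have : W ⊔ K ∙ A (A v) ≤ LinearMap.ker y :=
        sup_le (hkill y hy hyv) (by simp [Submodule.span_singleton_le_iff_mem, hyv, hy v, hy (A v)])
      exact ⟨fun w hw => this hw, fun _ => trivial⟩)
    rw [hdim, hWdim, htop] at this
    refine hle.trans (this.trans ?_)
    obtain ⟨m, hm⟩ := Nat.exists_eq_add_of_le hn
    rw [hm, show 3 + m - (2 + 1) = m by omega, show 3 + m - 1 = m + 2 by omega]
    nlinarith
  have hWA : W ≤ W.comap A := by
    nth_rewrite 1 [hW]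
    simp [Submodule.span_singleton_le_iff_mem, hAvW, h2]
  by_cases h3 : ∃ u, A u ∉ W ⊔ K ∙ u
  · obtain ⟨u, hu⟩ := h3
    have huW : u ∉ W := fun hmem => hu (Submodule.mem_sup_left (hWA hmem))
    have hdim1 := Submodule.finrank_sup_span_singleton huW
    have hdim2 := Submodule.finrank_sup_span_singleton hu
    have hle4 := Submodule.finrank_le (W ⊔ K ∙ u ⊔ K ∙ A u)
    have := finrank_le_of_eval (commutant A)
      ((LinearMap.applyₗ v).prod (LinearMap.applyₗ u) : (V →ₗ[K] V) →ₗ[K] V × V)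
      (W ⊔ K ∙ u ⊔ K ∙ A u) ⊤ (by
      intro y hy hyv
      have hyv' : y v = 0 := congrArg Prod.fst hyv
      have hyu : y u = 0 := congrArg Prod.snd hyv
      have : W ⊔ K ∙ u ⊔ K ∙ A u ≤ LinearMap.ker y :=
        sup_le (sup_le (hkill y hy hyv') (by simp [Submodule.span_singleton_le_iff_mem, hyu]))
          (by simp [Submodule.span_singleton_le_iff_mem, hyu, hy u])
      exact ⟨fun w hw => this hw, fun _ => trivial⟩)
    rw [hdim2, hdim1, hWdim, htop, finrank_prod] at this
    refine hle.trans (this.trans ?_)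
    rw [hdim2, hdim1, hWdim] at hle4
    obtain ⟨m, hm⟩ := Nat.exists_eq_add_of_le hle4
    rw [hm, show 2 + 1 + 1 + m - (2 + 1 + 1) = m by omega,
      show 2 + 1 + 1 + m - 1 = m + 3 by omega]
    nlinarith
  push Not at h3
  obtain ⟨a, ha⟩ : ∃ a : K, W.mapQ W A hWA = a • 1 := by
    apply exists_eq_smul_one_of_mem_span
    intro q
    obtain ⟨u, rfl⟩ := W.mkQ_surjective q
    obtain ⟨w, hw, z, hz, hwz⟩ := Submodule.mem_sup.1 (h3 u)
    obtain ⟨c, rfl⟩ := Submodule.mem_span_singleton.1 hz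
    refine Submodule.mem_span_singleton.2 ⟨c, ?_⟩
    have hw0 : W.mkQ w = 0 := by simpa using hw
    change c • W.mkQ u = W.mkQ (A u)
    rw [← hwz, map_add, hw0, zero_add, map_smul]
  have hq : ∀ u, (A - a • 1) u ∈ W := by
    intro u
    have h4 : W.mkQ (A u) = a • W.mkQ u := congrArg (fun g => g (W.mkQ u)) ha
    rw [← Submodule.ker_mkQ W, LinearMap.mem_ker]
    simp only [LinearMap.sub_apply, LinearMap.smul_apply, Module.End.one_apply, map_sub, map_smul,
      h4, sub_self]
  have hC := finrank_commutant_le_of_scalar_quotient hW hq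
  rw [hWdim] at hC
  have hrk := LinearMap.finrank_range_add_finrank_ker (A - a • 1)
  have hpos : finrank K (LinearMap.range (A - a • 1)) ≠ 0 := by
    intro h0
    rw [Submodule.finrank_eq_zero, LinearMap.range_eq_bot, sub_eq_zero] at h0
    exact hA a h0
  obtain ⟨m, hm⟩ := Nat.exists_eq_add_of_le hn
  by_cases hone : finrank K (LinearMap.range (A - a • 1)) = 1
  -- For `A - a` of rank one, `hC` only gives `(n - 1) ^ 2 + 1`; the trace condition removes one.
  · obtain ⟨y, hy, hty⟩ := exists_trace_ne_zero (A := A) (a := a) (by omega)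
    have hlt : finrank K (commutant A ⊓ LinearMap.ker (LinearMap.trace K V) :
        Submodule K (V →ₗ[K] V)) < finrank K (commutant A) := by
      apply Submodule.finrank_lt_finrank_of_lt
      refine lt_of_le_of_ne inf_le_left fun heq => hty ?_
      have : y ∈ commutant A ⊓ LinearMap.ker (LinearMap.trace K V) := by
        rw [heq]
        exact hy
      exact this.2
    have hker : finrank K (LinearMap.ker (A - a • 1)) = m + 2 := by omega
    rw [hker, hm, show 3 + m - 2 = m + 1 by omega] at hC
    rw [hm, show 3 + m - 1 = m + 2 by omega]
    nlinarith
  · have hker : finrank K (LinearMap.ker (A - a • 1)) ≤ m + 1 := by omega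
    rw [hm, show 3 + m - 2 = m + 1 by omega] at hC
    rw [hm, show 3 + m - 1 = m + 2 by omega]
    nlinarith

end

theorem stmt9 (K : Type*) [Field K] (n : ℕ) (hn : 3 ≤ n)
    (x : ↥(LieAlgebra.SpecialLinear.sl (Fin n) K))
    (hx : x ∉ LieAlgebra.center K ↥(LieAlgebra.SpecialLinear.sl (Fin n) K)) :
    Module.finrank K ↥(lieCentralizer K x) ≤ (n - 1) ^ 2 := by
  have hA : ∀ a : K, Matrix.toLin' x.1 ≠ a • 1 := by
    intro a ha
    apply hx
    have hxa : x.1 = a • (1 : Matrix (Fin n) (Fin n) K) := by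
      apply Matrix.toLin'.injective
      rw [ha, map_smul, Matrix.toLin'_one]
      rfl
    rw [LieModule.mem_maxTrivSubmodule]
    intro y
    apply Subtype.ext
    rw [LieAlgebra.SpecialLinear.sl_bracket, hxa]
    simp
  have hdim : finrank K (Fin n → K) = n := by simp
  have key := finrank_traceless_commutant_le (by rw [hdim]; exact hn) hA
  rw [hdim] at key
  refine le_trans ?_ key
  let ι : LieAlgebra.SpecialLinear.sl (Fin n) K →ₗ[K] ((Fin n → K) →ₗ[K] (Fin n → K)) :=
    { toFun := fun y => Matrix.toLin' y.1
      map_add' := fun y z => map_add Matrix.toLin' y.1 z.1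
      map_smul' := fun c y => map_smul Matrix.toLin' c y.1 }
  have hι : Function.Injective ι :=
    Matrix.toLin'.injective.comp Subtype.val_injective
  have hmem : ∀ y ∈ lieCentralizer K x, ι y ∈ commutant (Matrix.toLin' x.1) ⊓
      LinearMap.ker (LinearMap.trace K (Fin n → K)) := by
    intro y hy
    have hxy : x.1 * y.1 = y.1 * x.1 := by
      have h0 : ⁅x, y⁆ = 0 := hy
      have h1 := congrArg Subtype.val h0
      rw [LieAlgebra.SpecialLinear.sl_bracket] at h1
      exact sub_eq_zero.1 h1
    refine ⟨fun u => ?_, ?_⟩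
    · change Matrix.toLin' y.1 (Matrix.toLin' x.1 u) = Matrix.toLin' x.1 (Matrix.toLin' y.1 u)
      simp only [Matrix.toLin'_apply, Matrix.mulVec_mulVec, hxy]
    · change LinearMap.trace K (Fin n → K) (Matrix.toLin' y.1) = 0
      rw [Matrix.trace_toLin'_eq]
      exact y.2
  exact LinearMap.finrank_le_finrank_of_injective (f := ι.restrict hmem)
    fun y z hyz => Subtype.ext (hι (congrArg Subtype.val hyz))
end

section
/- Let K be a field of characteristic ≠ 2 and l ≥ 2. Then for every element x of sp_{2l}(K) that does not lie in the centre of sp_{2l}(K), the centralizer satisfies dim_K c(x) ≤ 2l² − l. -/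
open Matrix

section

variable {K : Type*} [Field K] {l : ℕ}

theorem mem_sp_iff {A : Matrix (Fin l ⊕ Fin l) (Fin l ⊕ Fin l) K} :
    A ∈ LieAlgebra.Symplectic.sp (Fin l) K ↔ Aᵀ * J (Fin l) K = -(J (Fin l) K * A) := by
  rw [← mul_neg, LieAlgebra.Symplectic.sp, mem_skewAdjointMatricesLieSubalgebra,
    mem_skewAdjointMatricesSubmodule]
  rfl

/-- Multiplication by `J` identifies `sp_{2l}(K)` with symmetric matrices, which are determined by
their values on unordered pairs of indices. -/
theorem finrank_sp_le :
    Module.finrank K (LieAlgebra.Symplectic.sp (Fin l) K) ≤ 2 * l ^ 2 + l := by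
  have hsymm : ∀ A : LieAlgebra.Symplectic.sp (Fin l) K, ∀ i j,
      (J (Fin l) K * A.1) i j = (J (Fin l) K * A.1) j i := by
    intro A i j
    have h := mem_sp_iff.1 A.2
    have h2 : (J (Fin l) K * A.1)ᵀ = J (Fin l) K * A.1 := by
      rw [transpose_mul, J_transpose, mul_neg, h, neg_neg]
    exact (congrFun (congrFun h2 j) i)
  let f : LieAlgebra.Symplectic.sp (Fin l) K →ₗ[K] (Sym2 (Fin l ⊕ Fin l) → K) :=
    { toFun := fun A => Sym2.lift ⟨fun i j => (J (Fin l) K * A.1) i j, hsymm A⟩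
      map_add' := by
        intro A B
        ext s
        induction s using Sym2.ind with
        | _ i j => simp [mul_add]
      map_smul' := by
        intro c A
        ext s
        induction s using Sym2.ind with
        | _ i j => simp }
  have hf : Function.Injective f := by
    rw [injective_iff_map_eq_zero]
    intro A hA
    have h0 : J (Fin l) K * A.1 = 0 := by
      ext i j
      simpa [f] using congrFun hA s(i, j)
    have h1 : J (Fin l) K * (J (Fin l) K * A.1) = 0 := by rw [h0, mul_zero]
    rw [← mul_assoc, J_squared, neg_mul, one_mul, neg_eq_zero] at h1
    exact Subtype.ext h1
  refine (LinearMap.finrank_le_finrank_of_injective hf).trans ?_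
  rw [Module.finrank_fintype_fun_eq_card, Sym2.card, Nat.choose_two_right]
  simp only [Fintype.card_sum, Fintype.card_fin]
  apply Nat.div_le_of_le_mul
  simp only [Nat.add_sub_cancel]
  apply le_of_eq
  ring

/-- In the symmetric square, `u · w + v · (x w) = 0` with `u = x v` independent of `v` forces
`w = 0`. -/
theorem eq_zero_of_symm_tensor {n : Type*} [Fintype n] [DecidableEq n] (h2 : (2 : K) ≠ 0)
    (x : Matrix n n K) {v w : n → K} (hv : LinearIndependent K ![v, x *ᵥ v])
    (h : vecMulVec (x *ᵥ v) w + vecMulVec (x *ᵥ w) v + vecMulVec v (x *ᵥ w)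
      + vecMulVec w (x *ᵥ v) = 0) : w = 0 := by
  have hv0 : v ≠ 0 := hv.ne_zero 0
  -- a functional vanishing at `v` but not at `x v`
  obtain ⟨a, hav, hau⟩ : ∃ a : n → K, v ⬝ᵥ a = 0 ∧ x *ᵥ v ⬝ᵥ a ≠ 0 := by
    have hmem : x *ᵥ v ∉ Submodule.span K {v} := by
      rw [Submodule.mem_span_singleton]
      rintro ⟨c, hc⟩
      exact (LinearIndependent.pair_iff' hv0).1 hv c hc
    obtain ⟨f, hfu, hfv⟩ := Submodule.exists_le_ker_of_notMem hmem
    obtain ⟨a, rfl⟩ := (dotProductEquiv K n).surjective f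
    have := hfv (Submodule.mem_span_singleton_self v)
    exact ⟨a, by simpa [dotProduct_comm] using this, by simpa [dotProduct_comm] using hfu⟩
  have key : ∀ {w y : n → K}, vecMulVec (x *ᵥ v) w + vecMulVec y v + vecMulVec v y
      + vecMulVec w (x *ᵥ v) = 0 →
      (w ⬝ᵥ a) • (x *ᵥ v) + (y ⬝ᵥ a) • v + (x *ᵥ v ⬝ᵥ a) • w = 0 := by
    intro w y h
    have := congrArg (· *ᵥ a) h
    simpa [add_mulVec, vecMulVec_mulVec, hav] using this
  have h1 := key h
  have hwa : w ⬝ᵥ a = 0 := by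
    have h3 := congrArg (· ⬝ᵥ a) h1
    simp only [add_dotProduct, smul_dotProduct, hav, zero_dotProduct, smul_eq_mul] at h3
    have h4 : 2 * (w ⬝ᵥ a) * (x *ᵥ v ⬝ᵥ a) = 0 := by linear_combination h3
    simpa [h2, hau] using h4
  obtain ⟨c, rfl⟩ : ∃ c : K, w = c • v := by
    refine ⟨-(x *ᵥ v ⬝ᵥ a)⁻¹ * (x *ᵥ w ⬝ᵥ a), ?_⟩
    rw [hwa, zero_smul, zero_add, add_comm] at h1
    have h5 := eq_neg_of_add_eq_zero_left h1
    rw [neg_mul, neg_smul, mul_smul, ← smul_neg, ← h5, smul_smul, inv_mul_cancel₀ hau, one_smul]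
  rw [hwa, zero_smul, zero_add, mulVec_smul, smul_dotProduct, smul_eq_mul, smul_smul,
    ← add_smul] at h1
  have h6 := (smul_eq_zero.1 h1).resolve_right hv0
  have h7 : 2 * c * (x *ᵥ v ⬝ᵥ a) = 0 := by linear_combination h6
  have hc : c = 0 := by simpa [h2, hau] using h7
  simp [hc]

/-- The product `v · w` in the symmetric square of `K^{2l}`, viewed in `sp_{2l}(K)` as the matrix
`(v wᵀ + w vᵀ) J`; linear in `w`. -/
def spProd (v : Fin l ⊕ Fin l → K) :
    (Fin l ⊕ Fin l → K) →ₗ[K] LieAlgebra.Symplectic.sp (Fin l) K where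
  toFun w := ⟨(vecMulVec v w + vecMulVec w v) * J (Fin l) K, by
    rw [mem_sp_iff, transpose_mul, J_transpose, transpose_add, transpose_vecMulVec,
      transpose_vecMulVec, add_comm (vecMulVec w v)]
    simp only [neg_mul, mul_assoc]⟩
  map_add' w w' := by
    apply Subtype.ext
    simp only [vecMulVec_add, add_vecMulVec, add_mul, AddMemClass.mk_add_mk]
    abel
  map_smul' c w := by
    apply Subtype.ext
    simp [vecMulVec_smul, smul_vecMulVec, add_mul]

theorem exists_linearIndependent_mulVec (h2 : (2 : K) ≠ 0)
    {x : LieAlgebra.Symplectic.sp (Fin l) K} (hx : x ≠ 0) :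
    ∃ v, LinearIndependent K ![v, x.1 *ᵥ v] := by
  by_contra! hcon
  obtain ⟨c, hc⟩ := (Matrix.toLin' x.1).exists_eq_smul_id_of_forall_notLinearIndependent
    (by simpa using hcon)
  have hxc : x.1 = c • (1 : Matrix (Fin l ⊕ Fin l) (Fin l ⊕ Fin l) K) := by
    apply Matrix.toLin'.injective
    rw [hc, map_smul, Matrix.toLin'_one]
    rfl
  have h := mem_sp_iff.1 x.2
  have h3 : (2 : K) • (x.1 * (J (Fin l) K * J (Fin l) K)) = 0 := by
    rw [hxc] at h ⊢
    simp only [transpose_smul, transpose_one, smul_mul, one_mul] at h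
    rw [two_smul, smul_mul, one_mul, ← smul_mul]
    nth_rw 1 [h]
    simp
  rw [J_squared, mul_neg, mul_one] at h3
  apply hx
  apply Subtype.ext
  simpa [h2] using h3

theorem injective_ad_comp_spProd (h2 : (2 : K) ≠ 0) (x : LieAlgebra.Symplectic.sp (Fin l) K)
    {v : Fin l ⊕ Fin l → K} (hv : LinearIndependent K ![v, x.1 *ᵥ v]) :
    Function.Injective
      (LieAlgebra.ad K (LieAlgebra.Symplectic.sp (Fin l) K) x ∘ₗ spProd v) := by
  rw [injective_iff_map_eq_zero]
  intro w hw
  apply eq_zero_of_symm_tensor h2 x.1 hv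
  have hx : J (Fin l) K * x.1 = -(x.1ᵀ * J (Fin l) K) := by rw [mem_sp_iff.1 x.2, neg_neg]
  have h : x.1 * ((vecMulVec v w + vecMulVec w v) * J (Fin l) K)
      - (vecMulVec v w + vecMulVec w v) * J (Fin l) K * x.1 = 0 := congrArg Subtype.val hw
  rw [mul_assoc, hx, mul_neg, sub_neg_eq_add, ← mul_assoc, ← mul_assoc, ← add_mul] at h
  have h' := congrArg (· * J (Fin l) K) h
  simp only [mul_assoc _ (J (Fin l) K) (J (Fin l) K), J_squared, mul_neg, mul_one, zero_mul,
    neg_eq_zero] at h'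
  simp only [mul_add, add_mul, mul_vecMulVec, vecMulVec_mul, vecMul_transpose] at h'
  rw [← h']
  abel

end

theorem stmt11 (K : Type*) [Field K] (hchar : ringChar K ≠ 2) (l : ℕ) (hl : 2 ≤ l)
    (x : ↥(LieAlgebra.Symplectic.sp (Fin l) K))
    (hx : x ∉ LieAlgebra.center K ↥(LieAlgebra.Symplectic.sp (Fin l) K)) :
    Module.finrank K ↥(lieCentralizer K x) ≤ 2 * l ^ 2 - l := by
  have h2 : (2 : K) ≠ 0 := Ring.two_ne_zero hchar
  have hx0 : x ≠ 0 := fun h => hx (h ▸ zero_mem _)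
  obtain ⟨v, hv⟩ := exists_linearIndependent_mulVec h2 hx0
  have hinj := injective_ad_comp_spProd h2 x hv
  have hrank : 2 * l ≤ Module.finrank K
      (LinearMap.range (LieAlgebra.ad K (LieAlgebra.Symplectic.sp (Fin l) K) x)) := by
    have h3 := LinearMap.finrank_range_of_inj hinj
    have h4 := Submodule.finrank_mono (LinearMap.range_comp_le_range (spProd v)
      (LieAlgebra.ad K (LieAlgebra.Symplectic.sp (Fin l) K) x))
    rw [h3, Module.finrank_fintype_fun_eq_card, Fintype.card_sum, Fintype.card_fin] at h4
    omega
  have hrn := LinearMap.finrank_range_add_finrank_ker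
    (LieAlgebra.ad K (LieAlgebra.Symplectic.sp (Fin l) K) x)
  have hdim := finrank_sp_le (K := K) (l := l)
  unfold lieCentralizer
  omega
end

section
/- Let K be a field of characteristic ≠ 2 and l ≥ 2. Then for every element x of so_{2l+1}(K) that does not lie in the centre of so_{2l+1}(K), the centralizer satisfies dim_K c(x) ≤ 2l² − 3l + 4. -/
namespace SkewCentralizer

open Module Matrix

/-! ### Linear maps that are scalar modulo a subspace -/

section Linear

variable {K V : Type*} [Field K] [AddCommGroup V] [Module K V]

/-- A vector space is not the union of two proper subspaces. -/
lemma eq_top_of_union {p q : Submodule K V} (h : ∀ v, v ∈ p ∨ v ∈ q) (hq : q ≠ ⊤) : p = ⊤ := by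
  obtain ⟨a, ha⟩ : ∃ a, a ∉ q := by
    by_contra! hall
    exact hq (eq_top_iff.2 fun v _ => hall v)
  have hap : a ∈ p := (h a).resolve_right ha
  refine eq_top_iff.2 fun b _ => ?_
  rcases h b with hb | hb
  · exact hb
  · have hab : a + b ∉ q := fun hc => ha ((Submodule.add_mem_iff_left q hb).1 hc)
    exact (Submodule.add_mem_iff_right p hap).1 ((h _).resolve_right hab)

lemma ne_top_of_finrank_lt [FiniteDimensional K V] {W : Submodule K V}
    (h : finrank K W < finrank K V) : W ≠ ⊤ := by
  rintro rfl
  simp at h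

lemma mem_sup_span_iff {W : Submodule K V} {v z : V} :
    z ∈ W ⊔ Submodule.span K {v} ↔ ∃ c : K, z - c • v ∈ W := by
  rw [Submodule.mem_sup]
  constructor
  · rintro ⟨w, hw, y, hy, rfl⟩
    obtain ⟨c, rfl⟩ := Submodule.mem_span_singleton.1 hy
    exact ⟨c, by simpa using hw⟩
  · rintro ⟨c, hc⟩
    exact ⟨_, hc, c • v, Submodule.mem_span_singleton.2 ⟨c, rfl⟩, by simp⟩

/-- If `f v` and `v` are dependent modulo `W` for every `v`, and `W` has codimension at least two,
then `f` is a scalar modulo `W`. -/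
lemma exists_scalar_mod [FiniteDimensional K V] (f : V →ₗ[K] V) (W : Submodule K V)
    (hW : finrank K W + 2 ≤ finrank K V)
    (h : ∀ v, v ∉ W → f v ∈ W ⊔ Submodule.span K {v}) :
    ∃ c : K, ∀ v, f v - c • v ∈ W := by
  obtain ⟨a, ha⟩ : ∃ a, a ∉ W := by
    by_contra! hall
    exact ne_top_of_finrank_lt (W := W) (by omega) (eq_top_iff.2 fun v _ => hall v)
  obtain ⟨c, hc⟩ := mem_sup_span_iff.1 (h a ha)
  have hproper : W ⊔ Submodule.span K {a} ≠ ⊤ :=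
    ne_top_of_finrank_lt (by rw [Submodule.finrank_sup_span_singleton ha]; omega)
  refine ⟨c, ?_⟩
  have key : Submodule.comap (f - c • LinearMap.id) W = ⊤ := by
    refine eq_top_of_union (fun b => ?_) hproper
    by_cases hb : b ∈ W ⊔ Submodule.span K {a}
    · exact Or.inr hb
    left
    have hb' := mem_sup_span_iff.not.1 hb
    push Not at hb'
    have hbW : b ∉ W := by simpa using hb' 0
    have habW : a + b ∉ W := by simpa [add_comm] using hb' (-1)
    obtain ⟨d, hd⟩ := mem_sup_span_iff.1 (h b hbW)
    obtain ⟨e, he⟩ := mem_sup_span_iff.1 (h (a + b) habW)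
    -- `f` scales `a`, `b`, `a + b` by `c`, `d`, `e` modulo `W`, and `a`, `b` are independent there.
    have hrel : (e - c) • a + (e - d) • b ∈ W := by
      have := W.sub_mem (W.add_mem hc hd) he
      rw [map_add] at this
      convert this using 1
      module
    have hde : e = d := by
      by_contra hne
      have hne' : e - d ≠ 0 := sub_ne_zero.2 hne
      apply hb' (-((e - d)⁻¹ * (e - c)))
      convert W.smul_mem (e - d)⁻¹ hrel using 1
      rw [smul_add, smul_smul, smul_smul, inv_mul_cancel₀ hne']
      module
    have hce : e = c := by
      by_contra hne
      have hne' : e - c ≠ 0 := sub_ne_zero.2 hne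
      apply ha
      rw [hde, sub_self, zero_smul, add_zero, ← hde] at hrel
      exact (W.smul_mem_iff hne').1 hrel
    simpa [← hce, hde] using hd
  intro v
  have hv : v ∈ Submodule.comap (f - c • LinearMap.id) W := key ▸ Submodule.mem_top
  simpa using hv

end Linear

/-! ### Evaluating spaces of skew matrices at vectors -/

section Skew

variable {K : Type*} [Field K] {n : ℕ}

lemma skew_dot {y : Matrix (Fin n) (Fin n) K} (hy : yᵀ = -y) (v w : Fin n → K) :
    w ⬝ᵥ y *ᵥ v = -((y *ᵥ w) ⬝ᵥ v) := by
  rw [dotProduct_mulVec, ← mulVec_transpose, hy, neg_mulVec, neg_dotProduct]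

lemma skew_dot_self (h2 : (2 : K) ≠ 0) {y : Matrix (Fin n) (Fin n) K} (hy : yᵀ = -y)
    (v : Fin n → K) : v ⬝ᵥ y *ᵥ v = 0 := by
  have h := skew_dot hy v v
  rw [dotProduct_comm (y *ᵥ v) v] at h
  have h' : 2 * (v ⬝ᵥ y *ᵥ v) = 0 := by linear_combination h
  exact (mul_eq_zero.1 h').resolve_left h2

/-- The matrices in `D` that kill `v`. -/
def killing (D : Submodule K (Matrix (Fin n) (Fin n) K)) (v : Fin n → K) :
    Submodule K (Matrix (Fin n) (Fin n) K) :=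
  D ⊓ LinearMap.ker ((Matrix.mulVecBilin K K).flip v)

lemma mem_killing {D : Submodule K (Matrix (Fin n) (Fin n) K)} {v : Fin n → K}
    {y : Matrix (Fin n) (Fin n) K} : y ∈ killing D v ↔ y ∈ D ∧ y *ᵥ v = 0 := by
  simp [killing]

/-- Rank-nullity for the evaluation of the matrices in `D` at `v`, when all values are orthogonal
to `U`. -/
lemma finrank_le_eval (D : Submodule K (Matrix (Fin n) (Fin n) K)) (v : Fin n → K)
    (U : Submodule K (Fin n → K)) (h : ∀ y ∈ D, ∀ w ∈ U, w ⬝ᵥ y *ᵥ v = 0) :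
    finrank K D ≤ (n - finrank K U) + finrank K (killing D v) := by
  let B : LinearMap.BilinForm K (Fin n → K) := Matrix.toBilin' 1
  have hB : B.Nondegenerate :=
    LinearMap.BilinForm.nondegenerate_toBilin'_of_det_ne_zero' _ (by simp)
  let ev : Matrix (Fin n) (Fin n) K →ₗ[K] (Fin n → K) := (Matrix.mulVecBilin K K).flip v
  have hdim := (ev.domRestrict D).finrank_range_add_finrank_ker
  have hker : finrank K (LinearMap.ker (ev.domRestrict D)) = finrank K (killing D v) := by
    have hmap : Submodule.map D.subtype (LinearMap.ker (ev.domRestrict D)) = killing D v := by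
      ext y
      simp [mem_killing, ev, and_comm]
    rw [← Submodule.finrank_map_subtype_eq, hmap]
  have hrange : LinearMap.range (ev.domRestrict D) ≤ B.orthogonal U := by
    rintro _ ⟨⟨y, hy⟩, rfl⟩ w hw
    have := h y hy w hw
    simpa [B, ev, Matrix.toBilin'_apply'] using this
  have hle := Submodule.finrank_mono hrange
  rw [LinearMap.BilinForm.finrank_orthogonal hB, finrank_fin_fun] at hle
  omega

/-- The skew matrices that kill the subspace `W`. -/
def skewKilling (W : Submodule K (Fin n → K)) : Submodule K (Matrix (Fin n) (Fin n) K) where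
  carrier := {y | yᵀ = -y ∧ ∀ w ∈ W, y *ᵥ w = 0}
  add_mem' := by
    rintro a b ⟨ha, ha'⟩ ⟨hb, hb'⟩
    refine ⟨by rw [transpose_add, ha, hb, neg_add], fun w hw => ?_⟩
    rw [add_mulVec, ha' w hw, hb' w hw, add_zero]
  zero_mem' := by simp
  smul_mem' := by
    rintro c a ⟨ha, ha'⟩
    refine ⟨by rw [transpose_smul, ha, smul_neg], fun w hw => ?_⟩
    rw [smul_mulVec, ha' w hw, smul_zero]

lemma mulVec_eq_zero_of_mem_sup {W : Submodule K (Fin n → K)} {y : Matrix (Fin n) (Fin n) K}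
    {v : Fin n → K} (hW : ∀ w ∈ W, y *ᵥ w = 0) (hv : y *ᵥ v = 0) :
    ∀ w ∈ W ⊔ Submodule.span K {v}, y *ᵥ w = 0 := by
  have h : W ⊔ Submodule.span K {v} ≤ LinearMap.ker y.mulVecLin := by
    rw [sup_le_iff, Submodule.span_singleton_le_iff_mem]
    exact ⟨fun w hw => hW w hw, hv⟩
  exact fun w hw => h hw

/-- The values at `v` of skew matrices killing `W` are orthogonal to `W + Kv`. -/
lemma dot_eq_zero_of_mem_sup (h2 : (2 : K) ≠ 0) {W : Submodule K (Fin n → K)}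
    {y : Matrix (Fin n) (Fin n) K} (hy : y ∈ skewKilling W) (v : Fin n → K) :
    ∀ w ∈ W ⊔ Submodule.span K {v}, w ⬝ᵥ y *ᵥ v = 0 := by
  intro w hw
  obtain ⟨c, hc⟩ := mem_sup_span_iff.1 hw
  have h1 : (w - c • v) ⬝ᵥ y *ᵥ v = 0 := by
    rw [skew_dot hy.1, hy.2 _ hc, zero_dotProduct, neg_zero]
  rw [sub_dotProduct, smul_dotProduct, skew_dot_self h2 hy.1, smul_zero, sub_zero] at h1
  exact h1

/-- Skew matrices killing `W` amount to alternating forms on a space of dimension `n - dim W`. The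
bound is proved by enlarging `W` one vector at a time. -/
lemma finrank_skewKilling_le (h2 : (2 : K) ≠ 0) (m : ℕ) :
    ∀ W : Submodule K (Fin n → K), finrank K W + m = n →
      finrank K (skewKilling W) ≤ m.choose 2 := by
  induction m with
  | zero =>
    intro W hW
    have hT : W = ⊤ := Submodule.eq_top_of_finrank_eq (by rw [finrank_fin_fun]; omega)
    have hbot : skewKilling W = ⊥ := by
      rw [eq_bot_iff]
      intro y hy
      have : y = 0 := Matrix.ext_of_mulVec_single fun i => by
        rw [hy.2 _ (hT ▸ Submodule.mem_top), zero_mulVec]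
      simpa using this
    rw [hbot, finrank_bot]
    exact Nat.zero_le _
  | succ m ih =>
    intro W hW
    obtain ⟨v, hv⟩ : ∃ v, v ∉ W := by
      by_contra! hall
      refine ne_top_of_finrank_lt (W := W) ?_ (eq_top_iff.2 fun v _ => hall v)
      rw [finrank_fin_fun]
      omega
    have hfr := Submodule.finrank_sup_span_singleton hv
    have h1 := finrank_le_eval (skewKilling W) v (W ⊔ Submodule.span K {v})
      fun y hy => dot_eq_zero_of_mem_sup h2 hy v
    have h3 : killing (skewKilling W) v ≤ skewKilling (W ⊔ Submodule.span K {v}) := by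
      intro y hy
      obtain ⟨hy, hyv⟩ := mem_killing.1 hy
      exact ⟨hy.1, mulVec_eq_zero_of_mem_sup hy.2 hyv⟩
    have h4 := Submodule.finrank_mono h3
    have h5 := ih (W ⊔ Submodule.span K {v}) (by omega)
    have h6 : (m + 1).choose 2 = m + m.choose 2 := by
      rw [Nat.choose_succ_succ' m 1, Nat.choose_one_right]
    omega

/-! ### Four independent vectors -/

/-- A nonzero skew matrix of odd size `n ≥ 5` admits vectors `u`, `v` for which
`u, xu, v, xv` are linearly independent; independence is expressed as a chain of
non-memberships. -/
lemma exists_independent (h2 : (2 : K) ≠ 0) (hn : 5 ≤ n) (hodd : Odd n)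
    {x : Matrix (Fin n) (Fin n) K} (hx : xᵀ = -x) (hx0 : x ≠ 0) :
    ∃ u v : Fin n → K, u ≠ 0 ∧ x *ᵥ u ∉ Submodule.span K {u} ∧
      v ∉ Submodule.span K {u} ⊔ Submodule.span K {x *ᵥ u} ∧
      x *ᵥ v ∉ Submodule.span K {u} ⊔ Submodule.span K {x *ᵥ u} ⊔ Submodule.span K {v} := by
  have hker : LinearMap.ker x.mulVecLin ≠ ⊤ := by
    intro h
    apply hx0
    refine Matrix.ext_of_mulVec_single fun i => ?_
    rw [zero_mulVec]
    exact (h ▸ Submodule.mem_top : Pi.single i 1 ∈ LinearMap.ker x.mulVecLin)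
  have hdet : x.det = 0 := by
    have h := det_transpose x
    rw [hx, det_neg, Fintype.card_fin, hodd.neg_one_pow] at h
    have h' : 2 * x.det = 0 := by linear_combination -h
    exact (mul_eq_zero.1 h').resolve_left h2
  have hrange : LinearMap.range x.mulVecLin ≠ ⊤ := by
    intro h
    obtain ⟨v, hv0, hv⟩ := Matrix.exists_mulVec_eq_zero_iff.2 hdet
    have hinj := LinearMap.injective_iff_surjective.2 (LinearMap.range_eq_top.1 h)
    exact hv0 (hinj (by simpa using hv))
  obtain ⟨u, hur, huk⟩ : ∃ u, u ∉ LinearMap.range x.mulVecLin ∧ x *ᵥ u ≠ 0 := by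
    by_contra! hall
    refine hrange (eq_top_of_union (q := LinearMap.ker x.mulVecLin) (fun v => ?_) hker)
    by_cases hv : v ∈ LinearMap.range x.mulVecLin
    · exact Or.inl hv
    · exact Or.inr (hall v hv)
  have hu0 : u ≠ 0 := by
    rintro rfl
    simp at huk
  have hxu : x *ᵥ u ∉ Submodule.span K {u} := by
    intro h
    obtain ⟨c, hc⟩ := Submodule.mem_span_singleton.1 h
    have hc0 : c ≠ 0 := by
      rintro rfl
      exact huk (by rw [← hc, zero_smul])
    exact hur ⟨c⁻¹ • u, by
      rw [mulVecLin_apply, mulVec_smul, ← hc, smul_smul, inv_mul_cancel₀ hc0, one_smul]⟩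
  set W := Submodule.span K {u} ⊔ Submodule.span K {x *ᵥ u} with hWdef
  have hW : finrank K W = 2 := by
    rw [hWdef, Submodule.finrank_sup_span_singleton hxu, finrank_span_singleton hu0]
  by_contra! hcon
  obtain ⟨c, hc⟩ := exists_scalar_mod x.mulVecLin W
    (by rw [hW, finrank_fin_fun]; omega) (fun v hv => hcon u v hu0 hxu hv)
  by_cases hc0 : c = 0
  · subst hc0
    -- `x` has rank one: its range lies in `W` but does not contain `u`.
    have hrk : ∀ v, ∃ b : K, x *ᵥ v = b • (x *ᵥ u) := by
      intro v
      have hv : x *ᵥ v ∈ W := by simpa using hc v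
      obtain ⟨b, hb⟩ := mem_sup_span_iff.1 hv
      obtain ⟨a, ha⟩ := Submodule.mem_span_singleton.1 hb
      refine ⟨b, ?_⟩
      by_cases ha0 : a = 0
      · rw [ha0, zero_smul] at ha
        exact sub_eq_zero.1 ha.symm
      · refine absurd ⟨a⁻¹ • (v - b • u), ?_⟩ hur
        rw [mulVecLin_apply, mulVec_smul, mulVec_sub, mulVec_smul, ← ha, smul_smul,
          inv_mul_cancel₀ ha0, one_smul]
    have horth : LinearMap.ker (dotProductBilin K K (x *ᵥ u)) = ⊤ := by
      refine eq_top_of_union (fun v => ?_) hker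
      obtain ⟨b, hb⟩ := hrk v
      have h := skew_dot_self h2 hx v
      rw [hb, dotProduct_smul, smul_eq_mul] at h
      rcases mul_eq_zero.1 h with h | h
      · right
        rw [LinearMap.mem_ker, mulVecLin_apply, hb, h, zero_smul]
      · left
        rw [dotProduct_comm] at h
        exact h
    refine huk (dotProduct_eq_zero _ fun w => ?_)
    exact (horth ▸ Submodule.mem_top : w ∈ LinearMap.ker (dotProductBilin K K (x *ᵥ u)))
  · let M : Matrix (Fin n) (Fin n) K := x - c • 1
    have hM : M.rank ≤ 2 := by
      rw [← hW]
      refine Submodule.finrank_mono ?_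
      rintro _ ⟨v, rfl⟩
      simpa [M, sub_mulVec, smul_mulVec] using hc v
    have hMt : Mᵀ.rank ≤ 2 := by rwa [rank_transpose]
    have htop : LinearMap.range M.mulVecLin ⊔ LinearMap.range Mᵀ.mulVecLin = ⊤ := by
      refine eq_top_iff.2 fun z _ => ?_
      have h2c : -(2 * c) ≠ 0 := neg_ne_zero.2 (mul_ne_zero h2 hc0)
      rw [← Submodule.smul_mem_iff _ h2c]
      refine Submodule.mem_sup.2 ⟨_, ⟨z, rfl⟩, _, ⟨z, rfl⟩, ?_⟩
      simp only [M, mulVecLin_apply, transpose_sub, hx, transpose_smul, transpose_one, sub_mulVec,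
        smul_mulVec, one_mulVec, neg_mulVec]
      module
    have hle := Submodule.finrank_add_le_finrank_add_finrank
      (LinearMap.range M.mulVecLin) (LinearMap.range Mᵀ.mulVecLin)
    rw [htop, finrank_top, finrank_fin_fun] at hle
    unfold Matrix.rank at hM hMt
    omega

/-! ### Dimension of the centralizer -/

/-- The skew matrices commuting with `x`. -/
def skewCommutant (x : Matrix (Fin n) (Fin n) K) : Submodule K (Matrix (Fin n) (Fin n) K) where
  carrier := {y | yᵀ = -y ∧ x * y = y * x}
  add_mem' := by
    rintro a b ⟨ha, ha'⟩ ⟨hb, hb'⟩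
    exact ⟨by rw [transpose_add, ha, hb, neg_add], by rw [mul_add, add_mul, ha', hb']⟩
  zero_mem' := by simp
  smul_mem' := by
    rintro c a ⟨ha, ha'⟩
    exact ⟨by rw [transpose_smul, ha, smul_neg], by rw [Matrix.mul_smul, Matrix.smul_mul, ha']⟩

lemma finrank_skewCommutant_le (h2 : (2 : K) ≠ 0) (hn : 5 ≤ n) (hodd : Odd n)
    {x : Matrix (Fin n) (Fin n) K} (hx : xᵀ = -x) (hx0 : x ≠ 0) :
    finrank K (skewCommutant x) ≤ (n - 1) + (n - 3) + (n - 4).choose 2 := by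
  obtain ⟨u, v, hu0, hxu, hv, hxv⟩ := exists_independent h2 hn hodd hx hx0
  have f1 := finrank_span_singleton (K := K) hu0
  have f2 := Submodule.finrank_sup_span_singleton hxu
  have f3 := Submodule.finrank_sup_span_singleton hv
  have f4 := Submodule.finrank_sup_span_singleton hxv
  have hcomm : ∀ y ∈ skewCommutant x, ∀ w, y *ᵥ w = 0 → y *ᵥ (x *ᵥ w) = 0 := by
    intro y hy w hw
    rw [mulVec_mulVec, ← hy.2, ← mulVec_mulVec, hw, mulVec_zero]
  have g1 := finrank_le_eval (skewCommutant x) u (Submodule.span K {u}) (by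
    intro y hy w hw
    obtain ⟨c, rfl⟩ := Submodule.mem_span_singleton.1 hw
    rw [smul_dotProduct, skew_dot_self h2 hy.1, smul_zero])
  have hC1 : ∀ y ∈ killing (skewCommutant x) u,
      y ∈ skewKilling (Submodule.span K {u} ⊔ Submodule.span K {x *ᵥ u}) := by
    intro y hy
    obtain ⟨hy, hyu⟩ := mem_killing.1 hy
    refine ⟨hy.1, mulVec_eq_zero_of_mem_sup (fun w hw => ?_) (hcomm y hy u hyu)⟩
    obtain ⟨c, rfl⟩ := Submodule.mem_span_singleton.1 hw
    rw [mulVec_smul, hyu, smul_zero]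
  have g2 := finrank_le_eval (killing (skewCommutant x) u) v _
    fun y hy => dot_eq_zero_of_mem_sup h2 (hC1 y hy) v
  have g3 : killing (killing (skewCommutant x) u) v ≤ skewKilling
      (Submodule.span K {u} ⊔ Submodule.span K {x *ᵥ u} ⊔ Submodule.span K {v} ⊔
        Submodule.span K {x *ᵥ v}) := by
    intro y hy
    obtain ⟨hy, hyv⟩ := mem_killing.1 hy
    have hyC := (mem_killing.1 hy).1
    exact ⟨hyC.1, mulVec_eq_zero_of_mem_sup
      (mulVec_eq_zero_of_mem_sup (hC1 y hy).2 hyv) (hcomm y hyC v hyv)⟩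
  have g4 := Submodule.finrank_mono g3
  have g5 := finrank_skewKilling_le h2 (n - 4) _ (by rw [f4, f3, f2, f1]; omega)
  rw [f1] at g1
  rw [f3, f2, f1] at g2
  omega

section Bridge

attribute [local instance] LieRing.ofAssociativeRing

lemma finrank_lieCentralizer_le (x : ↥(LieAlgebra.Orthogonal.so (Fin n) K)) :
    finrank K ↥(lieCentralizer K x) ≤ finrank K (skewCommutant x.1) := by
  have hle : Submodule.map (LieAlgebra.Orthogonal.so (Fin n) K).toSubmodule.subtype
      (lieCentralizer K x) ≤ skewCommutant x.1 := by
    rintro _ ⟨y, hy, rfl⟩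
    refine ⟨(LieAlgebra.Orthogonal.mem_so _ _ _).1 y.2, ?_⟩
    have h : ⁅x, y⁆ = 0 := hy
    exact sub_eq_zero.1 (congrArg Subtype.val h)
  exact (Submodule.finrank_map_subtype_eq _ (lieCentralizer K x)).symm.le.trans
    (Submodule.finrank_mono hle)

end Bridge

end Skew

end SkewCentralizer

theorem stmt12 (K : Type*) [Field K] (hchar : ringChar K ≠ 2) (l : ℕ) (hl : 2 ≤ l)
    (x : ↥(LieAlgebra.Orthogonal.so (Fin (2 * l + 1)) K))
    (hx : x ∉ LieAlgebra.center K ↥(LieAlgebra.Orthogonal.so (Fin (2 * l + 1)) K)) :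
    Module.finrank K ↥(lieCentralizer K x) ≤ 2 * l ^ 2 - 3 * l + 4 := by
  have h2 : (2 : K) ≠ 0 := Ring.two_ne_zero hchar
  have hx0 : (x : Matrix (Fin (2 * l + 1)) (Fin (2 * l + 1)) K) ≠ 0 := by
    intro h
    apply hx
    have hz : x = 0 := Subtype.ext h
    rw [hz]
    exact zero_mem _
  have hxs := (LieAlgebra.Orthogonal.mem_so _ _ _).1 x.2
  have hmain := SkewCentralizer.finrank_skewCommutant_le h2 (by omega) ⟨l, rfl⟩ hxs hx0
  refine (SkewCentralizer.finrank_lieCentralizer_le x).trans (hmain.trans ?_)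
  -- With `l = k + 2` all the truncated subtractions become exact.
  obtain ⟨k, rfl⟩ := Nat.exists_eq_add_of_le hl
  have e1 : 2 * (2 + k) + 1 - 4 = 2 * k + 1 := by omega
  have e2 : (2 * k + 1).choose 2 = k * (2 * k + 1) := by
    rw [Nat.choose_two_right, Nat.add_sub_cancel]
    exact Nat.div_eq_of_eq_mul_right two_pos (by ring)
  have e3 : 2 * (2 + k) ^ 2 = 2 * (k * k) + 8 * k + 8 := by ring
  have e4 : k * (2 * k + 1) = 2 * (k * k) + k := by ring
  rw [e1, e2, e3, e4]
  omega
end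

section
/- Let K be a field whose characteristic is 0 or a prime p ≠ 2, and let 𝔞 be a finite-dimensional Lie algebra over K such that the base change K̄ ⊗_K 𝔞 to the algebraic closure K̄ of K is isomorphic, as a Lie algebra over K̄, to sp_4(K̄). Then for any two K-subspaces U and V of 𝔞 one has dim_K [U,V] ≥ dim_K U + dim_K V − 10; equivalently, codim [U,V] ≤ codim U + codim V. -/
/-!
The theorem is a statement about the invariant trilinear form `tri x y z = tr([x, y] z)`: replacing
`[U, V]` by its orthogonal complement `W` under the trace form, it suffices that subspaces
`U, V, W` of `sp₄` with `tri = 0` on `U × V × W` satisfy `dim U + dim V + dim W ≤ 20`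
(`finrank_triple_le`). Base change to the algebraic closure preserves all dimensions and carries
brackets into the base change of `[U, V]`.

Grade `sp₄` by a generic linear function on the roots and replace `U, V, W` by their spaces of
leading terms. This keeps the dimensions, and `tri` still vanishes, since it pairs only degrees
adding up to zero. After this, each subspace is given by a set of roots and a
subspace of the Cartan algebra. Two kinds of constraint arise:

* if `α + β + γ = 0` for roots, then `α`, `β`, `γ` cannot occur in `U`, `V`, `W` respectively
  (`root_triple`), because the corresponding structure constant is `±2 ≠ 0`;
* if `α` occurs in `V` and `-α` in `W`, then `α` vanishes on the Cartan part of `U`, so for two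
  independent roots the Cartan part of `U` together with the four slots contributes at most `4`
  (`cartan_long`, `cartan_short`).

Four constraints of the first kind and three of the second partition the 24 root slots and the three
Cartan parts, so that the total dimension is at most `4 · 2 + 3 · 4 = 20`.
-/

open scoped TensorProduct

open Module

namespace SpFour

/-! ### Linear algebra -/

section General

variable {F : Type*} [Field F]

lemma finrank_eq_map_add {L M : Type*} [AddCommGroup L] [Module F L] [FiniteDimensional F L]
    [AddCommGroup M] [Module F M] (P : Submodule F L) (f : L →ₗ[F] M) :
    finrank F P = finrank F (P.map f) + finrank F ↥(P ⊓ LinearMap.ker f) := by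
  have h := LinearMap.finrank_range_add_finrank_ker (f.domRestrict P)
  have h1 : LinearMap.range (f.domRestrict P) = P.map f := by
    rw [LinearMap.domRestrict, LinearMap.range_comp, Submodule.range_subtype]
  have h2 : finrank F (LinearMap.ker (f.domRestrict P)) = finrank F ↥(P ⊓ LinearMap.ker f) := by
    have h3 : (LinearMap.ker (f.domRestrict P)).map P.subtype = P ⊓ LinearMap.ker f := by
      ext x
      simp only [Submodule.mem_map, LinearMap.mem_ker, Submodule.mem_inf]
      constructor
      · rintro ⟨y, hy, rfl⟩
        exact ⟨y.2, hy⟩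
      · rintro ⟨hx, hx'⟩
        exact ⟨⟨x, hx⟩, hx', rfl⟩
    rw [← h3]
    exact (LinearEquiv.finrank_eq
      (Submodule.equivMapOfInjective P.subtype (Submodule.subtype_injective P) _))
  rw [h1, h2] at h
  exact h.symm

lemma finrank_eq_zero_of_forall {M : Type*} [AddCommGroup M] [Module F M] (S : Submodule F M)
    (h : ∀ x ∈ S, x = 0) : finrank F S = 0 := by
  rw [(Submodule.eq_bot_iff S).2 h]
  exact finrank_bot F M

/-- The Cartan part of the count: each of two linearly independent functionals that is forced to
vanish on `S` (because both members `a, b`, resp. `c, d`, of a pair are present) cuts the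
dimension of `S ⊆ F²` by one. -/
lemma finrank_add_le_four (S : Submodule F (F × F)) (φ ψ : F × F →ₗ[F] F)
    (hind : ∀ x, φ x = 0 → ψ x = 0 → x = 0) {a b c d : ℕ}
    (ha : a ≤ 1) (hb : b ≤ 1) (hc : c ≤ 1) (hd : d ≤ 1)
    (h₁ : 0 < a → 0 < b → ∀ x ∈ S, φ x = 0) (h₂ : 0 < c → 0 < d → ∀ x ∈ S, ψ x = 0) :
    finrank F S + (a + b) + (c + d) ≤ 4 := by
  have e₁ := finrank_eq_map_add S φ
  have e₂ := finrank_eq_map_add (S ⊓ LinearMap.ker φ) ψ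
  have e₃ : finrank F ↥(S ⊓ LinearMap.ker φ ⊓ LinearMap.ker ψ) = 0 :=
    finrank_eq_zero_of_forall _ fun x hx => hind x hx.1.2 hx.2
  have l₁ : finrank F (S.map φ) ≤ 1 := (Submodule.finrank_le _).trans (finrank_self F).le
  have l₂ : finrank F ((S ⊓ LinearMap.ker φ).map ψ) ≤ 1 :=
    (Submodule.finrank_le _).trans (finrank_self F).le
  have z₁ : 0 < a → 0 < b → finrank F (S.map φ) = 0 := fun pa pb =>
    finrank_eq_zero_of_forall _ (by rintro _ ⟨x, hx, rfl⟩; exact h₁ pa pb x hx)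
  have z₂ : 0 < c → 0 < d → finrank F ((S ⊓ LinearMap.ker φ).map ψ) = 0 := fun pc pd =>
    finrank_eq_zero_of_forall _ (by rintro _ ⟨x, hx, rfl⟩; exact h₂ pc pd x hx.1)
  omega

end General

/-! ### Leading terms of subspaces of `sp₄` -/

variable (F : Type*) [Field F]

/-- The Lie algebra `sp₄(F)`. -/
abbrev L4 := ↥(LieAlgebra.Symplectic.sp (Fin 2) F)

variable {F}

/-- The matrix entry at `(i, j)` as a linear functional on `sp₄(F)`. -/
def entry (i j : Fin 2 ⊕ Fin 2) : L4 F →ₗ[F] F where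
  toFun x := x.1 i j
  map_add' _ _ := rfl
  map_smul' _ _ := rfl

@[simp] lemma entry_apply (i j : Fin 2 ⊕ Fin 2) (x : L4 F) : entry i j x = x.1 i j := rfl

open Sum in
/-- The homogeneous components of `sp₄` with respect to the grading in which the roots
`2ε₁, ε₁+ε₂, ε₁-ε₂, 2ε₂` have degrees `8, 5, 3, 2`, listed by decreasing degree: the index
`4` is the Cartan part (with values in `F × F`), and index `8 - k` carries the root opposite to
that of index `k`. Root components are put in the first factor of `F × F`. -/
def comp : ℕ → L4 F →ₗ[F] F × F
  | 0 => (entry (inl 0) (inr 0)).prod 0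
  | 1 => (entry (inl 0) (inr 1)).prod 0
  | 2 => (entry (inl 0) (inl 1)).prod 0
  | 3 => (entry (inl 1) (inr 1)).prod 0
  | 4 => (entry (inl 0) (inl 0)).prod (entry (inl 1) (inl 1))
  | 5 => (entry (inr 1) (inl 1)).prod 0
  | 6 => (entry (inl 1) (inl 0)).prod 0
  | 7 => (entry (inr 0) (inl 1)).prod 0
  | 8 => (entry (inr 0) (inl 0)).prod 0
  | _ => 0

/-- The elements of `U` whose components of index `< n` vanish. -/
def fil (U : Submodule F (L4 F)) : ℕ → Submodule F (L4 F)
  | 0 => U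
  | n + 1 => fil U n ⊓ LinearMap.ker (comp n)

lemma mem_fil {U : Submodule F (L4 F)} {n : ℕ} {x : L4 F} :
    x ∈ fil U n ↔ x ∈ U ∧ ∀ j < n, comp j x = 0 := by
  induction n with
  | zero => simp [fil]
  | succ n ih =>
    rw [fil, Submodule.mem_inf, ih, LinearMap.mem_ker, and_assoc]
    simp only [Nat.lt_succ_iff_lt_or_eq, or_imp, forall_and, forall_eq]

/-- The `n`-th graded piece of `U`: the leading terms of the elements of `U` whose leading
component has index `n`. -/
def lead (U : Submodule F (L4 F)) (n : ℕ) : Submodule F (F × F) := (fil U n).map (comp n)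

/-- The dimension of the `n`-th graded piece of `U`. -/
noncomputable def ld (U : Submodule F (L4 F)) (n : ℕ) : ℕ := finrank F (lead U n)

open Sum in
/-- The components in terms of matrix entries. -/
lemma comp_eq (x : L4 F) :
    comp 0 x = (x.1 (inl 0) (inr 0), 0) ∧
    comp 1 x = (x.1 (inl 0) (inr 1), 0) ∧
    comp 2 x = (x.1 (inl 0) (inl 1), 0) ∧
    comp 3 x = (x.1 (inl 1) (inr 1), 0) ∧
    comp 4 x = (x.1 (inl 0) (inl 0), x.1 (inl 1) (inl 1)) ∧
    comp 5 x = (x.1 (inr 1) (inl 1), 0) ∧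
    comp 6 x = (x.1 (inl 1) (inl 0), 0) ∧
    comp 7 x = (x.1 (inr 0) (inl 1), 0) ∧
    comp 8 x = (x.1 (inr 0) (inl 0), 0) :=
  ⟨rfl, rfl, rfl, rfl, rfl, rfl, rfl, rfl, rfl⟩

open Sum in
/-- The defining equation `xᵀ J = -J x` entrywise: `x` has blocks `A, B, C, -Aᵀ` with `B`, `C`
symmetric. -/
lemma entry_rel (x : L4 F) :
    (∀ i j, x.1 (inr i) (inr j) = - x.1 (inl j) (inl i)) ∧
    x.1 (inl 1) (inr 0) = x.1 (inl 0) (inr 1) ∧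
    x.1 (inr 1) (inl 0) = x.1 (inr 0) (inl 1) := by
  have hx : x.1.transpose * Matrix.J (Fin 2) F = Matrix.J (Fin 2) F * (-x.1) :=
    (mem_skewAdjointMatricesSubmodule (Matrix.J (Fin 2) F) x.1).1 x.2
  have h := fun i j => congrFun (congrFun hx i) j
  simp only [Matrix.J, Matrix.mul_apply, Fintype.sum_sum_type, Fin.sum_univ_two,
    Matrix.transpose_apply, Matrix.neg_apply] at h
  refine ⟨fun i j => ?_, ?_, ?_⟩
  · have := h (inl i) (inr j)
    fin_cases i <;> fin_cases j <;> simpa using this.symm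
  · have := h (inr 0) (inr 1)
    simpa using this
  · have := h (inl 0) (inl 1)
    simpa using this

open Sum in
/-- Vanishing of the components of index `< n`, in terms of matrix entries. -/
lemma comp_zero {x : L4 F} {n : ℕ} (h : ∀ j < n, comp j x = 0) :
    (0 < n → x.1 (inl 0) (inr 0) = 0) ∧
    (1 < n → x.1 (inl 0) (inr 1) = 0) ∧
    (2 < n → x.1 (inl 0) (inl 1) = 0) ∧
    (3 < n → x.1 (inl 1) (inr 1) = 0) ∧
    (4 < n → x.1 (inl 0) (inl 0) = 0 ∧ x.1 (inl 1) (inl 1) = 0) ∧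
    (5 < n → x.1 (inr 1) (inl 1) = 0) ∧
    (6 < n → x.1 (inl 1) (inl 0) = 0) ∧
    (7 < n → x.1 (inr 0) (inl 1) = 0) ∧
    (8 < n → x.1 (inr 0) (inl 0) = 0) := by
  refine ⟨fun hn => ?_, fun hn => ?_, fun hn => ?_, fun hn => ?_, fun hn => ?_, fun hn => ?_,
    fun hn => ?_, fun hn => ?_, fun hn => ?_⟩
  all_goals first
    | exact congrArg Prod.fst (h _ hn)
    | exact ⟨congrArg Prod.fst (h _ hn), congrArg Prod.snd (h _ hn)⟩

lemma finrank_fil_nine (U : Submodule F (L4 F)) : finrank F (fil U 9) = 0 := by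
  refine finrank_eq_zero_of_forall _ fun x hx => ?_
  have h := comp_zero (mem_fil.1 hx).2
  norm_num at h
  obtain ⟨r1, r2, r3⟩ := entry_rel x
  ext i j
  rcases i with i | i <;> rcases j with j | j <;> fin_cases i <;> fin_cases j <;>
    simp [r1, r2, r3, h]

/-- Passing to leading terms preserves the dimension. -/
lemma finrank_eq_sum_ld (U : Submodule F (L4 F)) :
    finrank F U = ld U 0 + ld U 1 + ld U 2 + ld U 3 + ld U 4 + ld U 5 + ld U 6 + ld U 7 +
      ld U 8 := by
  have step : ∀ n, finrank F (fil U n) = ld U n + finrank F (fil U (n + 1)) := fun n =>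
    finrank_eq_map_add (fil U n) (comp n)
  have h9 := finrank_fil_nine U
  change finrank F (fil U 0) = _
  rw [step 0, step 1, step 2, step 3, step 4, step 5, step 6, step 7, step 8, h9]
  ring

lemma ld_le_one (U : Submodule F (L4 F)) {n : ℕ} (hn : ∀ x : L4 F, (comp n x).2 = 0) :
    ld U n ≤ 1 := by
  have h := finrank_eq_map_add (lead U n) (LinearMap.fst F F F)
  have h0 : finrank F ↥(lead U n ⊓ LinearMap.ker (LinearMap.fst F F F)) = 0 := by
    refine finrank_eq_zero_of_forall _ ?_
    rintro _ ⟨⟨x, -, rfl⟩, hx⟩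
    exact Prod.ext hx (hn x)
  have l₁ : finrank F ((lead U n).map (LinearMap.fst F F F)) ≤ 1 :=
    (Submodule.finrank_le _).trans (finrank_self F).le
  unfold ld
  omega

lemma exists_of_ld_pos {U : Submodule F (L4 F)} {n : ℕ} (hn : ∀ x : L4 F, (comp n x).2 = 0)
    (h : 0 < ld U n) : ∃ x ∈ U, (∀ j < n, comp j x = 0) ∧ (comp n x).1 ≠ 0 := by
  by_contra! hc
  refine h.ne' (finrank_eq_zero_of_forall _ ?_)
  rintro _ ⟨x, hx, rfl⟩
  obtain ⟨hU, hj⟩ := mem_fil.1 hx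
  exact Prod.ext (hc x hU hj) (hn x)

/-! ### The trilinear form on leading terms -/

/-- The invariant alternating trilinear form `(x, y, z) ↦ tr([x, y] z)`. -/
def tri (x y z : L4 F) : F := Matrix.trace (⁅x, y⁆.1 * z.1)

lemma tri_cycle (x y z : L4 F) : tri x y z = tri y z x := by
  simp only [tri, LieSubalgebra.coe_bracket, Ring.lie_def, sub_mul, Matrix.trace_sub]
  rw [Matrix.trace_mul_cycle y.1 z.1 x.1, Matrix.trace_mul_cycle y.1 x.1 z.1]

lemma tri_expand (x y z : L4 F) : tri x y z =
    ∑ i, ∑ k, (∑ j, x.1 i j * y.1 j k - ∑ j, y.1 i j * x.1 j k) * z.1 k i := by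
  simp only [tri, LieSubalgebra.coe_bracket, Ring.lie_def, Matrix.trace, Matrix.diag,
    Matrix.mul_apply, Matrix.sub_apply]

/-- The lemmas `tri_i_j_k` evaluate `tri` on elements whose leading components have indices at
least `i, j, k`, the corresponding degrees adding up to zero: only the leading components
contribute. -/
lemma tri_4_0_8 {x y z : L4 F} (hx : ∀ j < 4, comp j x = 0)
    (_hy : ∀ j < 0, comp j y = 0) (hz : ∀ j < 8, comp j z = 0) :
    tri x y z = 2 * (comp 4 x).1 * (comp 0 y).1 * (comp 8 z).1 := by
  have vx := comp_zero hx
  have vz := comp_zero hz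
  norm_num at vx vz
  simp only [tri_expand, Fintype.sum_sum_type, Fin.sum_univ_two, comp_eq, entry_rel,
    vx, vz]
  ring

lemma tri_4_3_5 {x y z : L4 F} (hx : ∀ j < 4, comp j x = 0)
    (hy : ∀ j < 3, comp j y = 0) (hz : ∀ j < 5, comp j z = 0) :
    tri x y z = 2 * (comp 4 x).2 * (comp 3 y).1 * (comp 5 z).1 := by
  have vx := comp_zero hx
  have vy := comp_zero hy
  have vz := comp_zero hz
  norm_num at vx vy vz
  simp only [tri_expand, Fintype.sum_sum_type, Fin.sum_univ_two, comp_eq, entry_rel,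
    vx, vy, vz]
  ring

lemma tri_4_2_6 {x y z : L4 F} (hx : ∀ j < 4, comp j x = 0)
    (hy : ∀ j < 2, comp j y = 0) (hz : ∀ j < 6, comp j z = 0) :
    tri x y z = 2 * ((comp 4 x).1 - (comp 4 x).2) * (comp 2 y).1 * (comp 6 z).1 := by
  have vx := comp_zero hx
  have vy := comp_zero hy
  have vz := comp_zero hz
  norm_num at vx vy vz
  simp only [tri_expand, Fintype.sum_sum_type, Fin.sum_univ_two, comp_eq, entry_rel,
    vx, vy, vz]
  ring

lemma tri_4_7_1 {x y z : L4 F} (hx : ∀ j < 4, comp j x = 0)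
    (hy : ∀ j < 7, comp j y = 0) (hz : ∀ j < 1, comp j z = 0) :
    tri x y z = -2 * ((comp 4 x).1 + (comp 4 x).2) * (comp 7 y).1 * (comp 1 z).1 := by
  have vx := comp_zero hx
  have vy := comp_zero hy
  have vz := comp_zero hz
  norm_num at vx vy vz
  simp only [tri_expand, Fintype.sum_sum_type, Fin.sum_univ_two, comp_eq, entry_rel,
    vx, vy, vz]
  ring

lemma tri_0_7_6 {x y z : L4 F} (_hx : ∀ j < 0, comp j x = 0)
    (hy : ∀ j < 7, comp j y = 0) (hz : ∀ j < 6, comp j z = 0) :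
    tri x y z = 2 * (comp 0 x).1 * (comp 7 y).1 * (comp 6 z).1 := by
  have vy := comp_zero hy
  have vz := comp_zero hz
  norm_num at vy vz
  simp only [tri_expand, Fintype.sum_sum_type, Fin.sum_univ_two, comp_eq, entry_rel,
    vy, vz]
  ring

lemma tri_3_2_7 {x y z : L4 F} (hx : ∀ j < 3, comp j x = 0)
    (hy : ∀ j < 2, comp j y = 0) (hz : ∀ j < 7, comp j z = 0) :
    tri x y z = -2 * (comp 3 x).1 * (comp 2 y).1 * (comp 7 z).1 := by
  have vx := comp_zero hx
  have vy := comp_zero hy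
  have vz := comp_zero hz
  norm_num at vx vy vz
  simp only [tri_expand, Fintype.sum_sum_type, Fin.sum_univ_two, comp_eq, entry_rel,
    vx, vy, vz]
  ring

lemma tri_1_8_2 {x y z : L4 F} (hx : ∀ j < 1, comp j x = 0)
    (hy : ∀ j < 8, comp j y = 0) (hz : ∀ j < 2, comp j z = 0) :
    tri x y z = 2 * (comp 1 x).1 * (comp 8 y).1 * (comp 2 z).1 := by
  have vx := comp_zero hx
  have vy := comp_zero hy
  have vz := comp_zero hz
  norm_num at vx vy vz
  simp only [tri_expand, Fintype.sum_sum_type, Fin.sum_univ_two, comp_eq, entry_rel,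
    vx, vy, vz]
  ring

lemma tri_6_5_1 {x y z : L4 F} (hx : ∀ j < 6, comp j x = 0)
    (hy : ∀ j < 5, comp j y = 0) (hz : ∀ j < 1, comp j z = 0) :
    tri x y z = -2 * (comp 6 x).1 * (comp 5 y).1 * (comp 1 z).1 := by
  have vx := comp_zero hx
  have vy := comp_zero hy
  have vz := comp_zero hz
  norm_num at vx vy vz
  simp only [tri_expand, Fintype.sum_sum_type, Fin.sum_univ_two, comp_eq, entry_rel,
    vx, vy, vz]
  ring

/-! ### The dimension count -/

lemma comp_snd {n : ℕ} (hn : n ≠ 4) (x : L4 F) : (comp n x).2 = 0 := by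
  unfold comp
  split <;> first | rfl | exact absurd rfl hn

/-- The Cartan constraint for the long roots `2ε₁` and `2ε₂`. -/
lemma cartan_long (h2 : (2 : F) ≠ 0) {U V W : Submodule F (L4 F)}
    (hT : ∀ u ∈ U, ∀ v ∈ V, ∀ w ∈ W, tri u v w = 0) :
    ld U 4 + (ld V 0 + ld W 8) + (ld V 3 + ld W 5) ≤ 4 := by
  refine finrank_add_le_four (lead U 4) (LinearMap.fst F F F) (LinearMap.snd F F F)
    (fun x h h' => Prod.ext h h') (ld_le_one V (comp_snd (by norm_num)))
    (ld_le_one W (comp_snd (by norm_num))) (ld_le_one V (comp_snd (by norm_num)))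
    (ld_le_one W (comp_snd (by norm_num))) ?_ ?_
  · rintro hv hw _ ⟨u, hu, rfl⟩
    obtain ⟨hu, zu⟩ := mem_fil.1 hu
    obtain ⟨v, hv, zv, nv⟩ := exists_of_ld_pos (comp_snd (by norm_num)) hv
    obtain ⟨w, hw, zw, nw⟩ := exists_of_ld_pos (comp_snd (by norm_num)) hw
    have h := hT u hu v hv w hw
    rw [tri_4_0_8 zu zv zw] at h
    simpa [h2, nv, nw] using h
  · rintro hv hw _ ⟨u, hu, rfl⟩
    obtain ⟨hu, zu⟩ := mem_fil.1 hu
    obtain ⟨v, hv, zv, nv⟩ := exists_of_ld_pos (comp_snd (by norm_num)) hv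
    obtain ⟨w, hw, zw, nw⟩ := exists_of_ld_pos (comp_snd (by norm_num)) hw
    have h := hT u hu v hv w hw
    rw [tri_4_3_5 zu zv zw] at h
    simpa [h2, nv, nw] using h

/-- The Cartan constraint for the short roots `ε₁ - ε₂` and `-ε₁ - ε₂`. -/
lemma cartan_short (h2 : (2 : F) ≠ 0) {U V W : Submodule F (L4 F)}
    (hT : ∀ u ∈ U, ∀ v ∈ V, ∀ w ∈ W, tri u v w = 0) :
    ld U 4 + (ld V 2 + ld W 6) + (ld V 7 + ld W 1) ≤ 4 := by
  refine finrank_add_le_four (lead U 4) (LinearMap.fst F F F - LinearMap.snd F F F)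
    (LinearMap.fst F F F + LinearMap.snd F F F)
    (fun x h h' => ?_) (ld_le_one V (comp_snd (by norm_num)))
    (ld_le_one W (comp_snd (by norm_num))) (ld_le_one V (comp_snd (by norm_num)))
    (ld_le_one W (comp_snd (by norm_num))) ?_ ?_
  · simp only [LinearMap.sub_apply, LinearMap.add_apply, LinearMap.fst_apply,
      LinearMap.snd_apply] at h h'
    have e₁ : 2 * x.1 = 0 := by linear_combination h + h'
    have e₂ : 2 * x.2 = 0 := by linear_combination h' - h
    exact Prod.ext ((mul_eq_zero.1 e₁).resolve_left h2) ((mul_eq_zero.1 e₂).resolve_left h2)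
  · rintro hv hw _ ⟨u, hu, rfl⟩
    obtain ⟨hu, zu⟩ := mem_fil.1 hu
    obtain ⟨v, hv, zv, nv⟩ := exists_of_ld_pos (comp_snd (by norm_num)) hv
    obtain ⟨w, hw, zw, nw⟩ := exists_of_ld_pos (comp_snd (by norm_num)) hw
    have h := hT u hu v hv w hw
    rw [tri_4_2_6 zu zv zw] at h
    simpa [h2, nv, nw] using h
  · rintro hv hw _ ⟨u, hu, rfl⟩
    obtain ⟨hu, zu⟩ := mem_fil.1 hu
    obtain ⟨v, hv, zv, nv⟩ := exists_of_ld_pos (comp_snd (by norm_num)) hv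
    obtain ⟨w, hw, zw, nw⟩ := exists_of_ld_pos (comp_snd (by norm_num)) hw
    have h := hT u hu v hv w hw
    rw [tri_4_7_1 zu zv zw] at h
    simpa [h2, nv, nw] using h

/-- If the form `tri` is a nonzero multiple `c` of the product of leading coefficients in the root
degrees `i, j, k`, then these degrees cannot all occur in `U, V, W`. -/
lemma root_triple {U V W : Submodule F (L4 F)}
    (hT : ∀ u ∈ U, ∀ v ∈ V, ∀ w ∈ W, tri u v w = 0) {i j k : ℕ}
    (hi : i ≠ 4) (hj : j ≠ 4) (hk : k ≠ 4) {c : F} (hc : c ≠ 0)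
    (h : ∀ {x y z : L4 F}, (∀ n < i, comp n x = 0) → (∀ n < j, comp n y = 0) →
      (∀ n < k, comp n z = 0) →
      tri x y z = c * (comp i x).1 * (comp j y).1 * (comp k z).1) :
    ld U i + ld V j + ld W k ≤ 2 := by
  have lu := ld_le_one U (comp_snd hi)
  have lv := ld_le_one V (comp_snd hj)
  have lw := ld_le_one W (comp_snd hk)
  by_contra hgt
  obtain ⟨u, hu, zu, nu⟩ := exists_of_ld_pos (U := U) (comp_snd hi) (by omega)
  obtain ⟨v, hv, zv, nv⟩ := exists_of_ld_pos (U := V) (comp_snd hj) (by omega)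
  obtain ⟨w, hw, zw, nw⟩ := exists_of_ld_pos (U := W) (comp_snd hk) (by omega)
  have h0 := hT u hu v hv w hw
  rw [h zu zv zw] at h0
  exact mul_ne_zero (mul_ne_zero (mul_ne_zero hc nu) nv) nw h0

/-- Three subspaces of `sp₄` on which `tri` vanishes have total dimension at most `20`. -/
theorem finrank_triple_le (h2 : (2 : F) ≠ 0) {U V W : Submodule F (L4 F)}
    (hT : ∀ u ∈ U, ∀ v ∈ V, ∀ w ∈ W, tri u v w = 0) :
    finrank F U + finrank F V + finrank F W ≤ 20 := by
  have hT' : ∀ v ∈ V, ∀ w ∈ W, ∀ u ∈ U, tri v w u = 0 := fun v hv w hw u hu => by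
    rw [← tri_cycle]
    exact hT u hu v hv w hw
  have hT'' : ∀ w ∈ W, ∀ u ∈ U, ∀ v ∈ V, tri w u v = 0 := fun w hw u hu v hv => by
    rw [tri_cycle]
    exact hT u hu v hv w hw
  have h2' : (-2 : F) ≠ 0 := neg_ne_zero.2 h2
  -- Each of the 24 pairs (subspace, root) and 3 Cartan parts occurs in exactly one inequality.
  have c₁ := cartan_long h2 hT
  have c₂ := cartan_long h2 hT'
  have c₃ := cartan_short h2 hT''
  have r₁ := root_triple hT (by norm_num) (by norm_num) (by norm_num) h2 tri_0_7_6
  have r₂ := root_triple hT (by norm_num) (by norm_num) (by norm_num) h2' tri_3_2_7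
  have r₃ := root_triple hT (by norm_num) (by norm_num) (by norm_num) h2 tri_1_8_2
  have r₄ := root_triple hT (by norm_num) (by norm_num) (by norm_num) h2' tri_6_5_1
  rw [finrank_eq_sum_ld U, finrank_eq_sum_ld V, finrank_eq_sum_ld W]
  omega

/-! ### Orthogonal complements and base change -/

/-- The matrix with blocks `A, B, C, -Aᵀ`, `B` and `C` symmetric, as a linear function of its ten
free entries. -/
def param : (Fin 10 → F) →ₗ[F] Matrix (Fin 2 ⊕ Fin 2) (Fin 2 ⊕ Fin 2) F where
  toFun a := Matrix.fromBlocks !![a 0, a 1; a 2, a 3] !![a 4, a 5; a 5, a 6]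
    !![a 7, a 8; a 8, a 9] !![-a 0, -a 2; -a 1, -a 3]
  map_add' a b := by
    ext (i | i) (j | j) <;> fin_cases i <;> fin_cases j <;> simp [add_comm]
  map_smul' c a := by
    ext (i | i) (j | j) <;> fin_cases i <;> fin_cases j <;> simp

lemma param_mem (a : Fin 10 → F) : param a ∈ LieAlgebra.Symplectic.sp (Fin 2) F := by
  refine (mem_skewAdjointMatricesSubmodule (Matrix.J (Fin 2) F) (param a)).2 ?_
  change (param a).transpose * Matrix.J (Fin 2) F = Matrix.J (Fin 2) F * (-param a)
  ext (i | i) (j | j) <;> fin_cases i <;> fin_cases j <;>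
    simp [param, Matrix.J, Matrix.mul_apply]

lemma ten_le_finrank : 10 ≤ finrank F (L4 F) := by
  let f : (Fin 10 → F) →ₗ[F] L4 F :=
    { toFun := fun a => ⟨param a, param_mem a⟩
      map_add' := fun a b => Subtype.ext (map_add param a b)
      map_smul' := fun c a => Subtype.ext (map_smul param c a) }
  have hinj : Function.Injective f := by
    rw [← LinearMap.ker_eq_bot, LinearMap.ker_eq_bot']
    intro a ha
    have h : param a = 0 := congrArg Subtype.val ha
    have h' := fun i j => congrFun (congrFun h i) j
    open Sum in
    have t := And.intro (h' (inl 0) (inl 0)) <| And.intro (h' (inl 0) (inl 1)) <|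
      And.intro (h' (inl 1) (inl 0)) <| And.intro (h' (inl 1) (inl 1)) <|
      And.intro (h' (inl 0) (inr 0)) <| And.intro (h' (inl 0) (inr 1)) <|
      And.intro (h' (inl 1) (inr 1)) <| And.intro (h' (inr 0) (inl 0)) <|
      And.intro (h' (inr 0) (inl 1)) (h' (inr 1) (inl 1))
    simp [param] at t
    funext i
    fin_cases i <;> simp [t]
  have := LinearMap.finrank_le_finrank_of_injective hinj
  simpa using this

/-- The inequality for `sp₄`, with `S` any subspace containing the brackets. -/
theorem finrank_add_le (h2 : (2 : F) ≠ 0) {U V S : Submodule F (L4 F)}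
    (hS : ∀ u ∈ U, ∀ v ∈ V, ⁅u, v⁆ ∈ S) :
    finrank F U + finrank F V ≤ finrank F S + 10 := by
  -- `g z` is the functional `s ↦ tr(s z)` on `S`, so `ker g` is the orthogonal complement of `S`.
  let g : L4 F →ₗ[F] (S →ₗ[F] F) := LinearMap.mk₂ F (fun z s => Matrix.trace (s.1.1 * z.1))
    (by intros; simp [mul_add]) (by intros; simp) (by intros; simp [add_mul]) (by intros; simp)
  have hg := LinearMap.finrank_range_add_finrank_ker g
  have hr : finrank F (LinearMap.range g) ≤ finrank F S :=
    (Submodule.finrank_le _).trans (Subspace.dual_finrank_eq (K := F) (V := S)).le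
  have h20 := finrank_triple_le (W := LinearMap.ker g) h2 (U := U) (V := V)
    fun u hu v hv w hw => LinearMap.congr_fun (LinearMap.mem_ker.1 hw) ⟨_, hS u hu v hv⟩
  have := ten_le_finrank (F := F)
  omega

lemma finrank_baseChange {K A : Type*} [Field K] [AddCommGroup A] [Module K A] [Algebra K F]
    (U : Submodule K A) : finrank F (U.baseChange F) = finrank K U := by
  rw [← (Submodule.toBaseChange.toLinearEquiv F U).finrank_eq, Module.finrank_baseChange]

lemma lie_mem_baseChange {K A : Type*} [Field K] [LieRing A] [LieAlgebra K A] [Algebra K F]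
    {U V : Submodule K A} {u v : F ⊗[K] A} (hu : u ∈ U.baseChange F) (hv : v ∈ V.baseChange F) :
    ⁅u, v⁆ ∈ (bracketSpan U V).baseChange F := by
  rw [Submodule.baseChange_eq_span] at hu hv
  induction hu using Submodule.span_induction with
  | zero => simp
  | add x y _ _ hx hy => rw [add_lie]; exact add_mem hx hy
  | smul c x _ hx => rw [smul_lie]; exact Submodule.smul_mem _ c hx
  | mem x hx =>
    obtain ⟨x, hx, rfl⟩ := hx
    induction hv using Submodule.span_induction with
    | zero => simp
    | add y z _ _ hy hz => rw [lie_add]; exact add_mem hy hz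
    | smul c y _ hy => rw [lie_smul]; exact Submodule.smul_mem _ c hy
    | mem y hy =>
      obtain ⟨y, hy, rfl⟩ := hy
      rw [TensorProduct.mk_apply, TensorProduct.mk_apply,
        LieAlgebra.ExtendScalars.bracket_tmul]
      exact Submodule.tmul_mem_baseChange_of_mem _ (Submodule.subset_span ⟨x, hx, y, hy, rfl⟩)

end SpFour

theorem stmt18 (K : Type*) [Field K]
    (hchar : ringChar K = 0 ∨ (Nat.Prime (ringChar K) ∧ ringChar K ≠ 2))
    (A : Type*) [LieRing A] [LieAlgebra K A] [FiniteDimensional K A]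
    (e : (AlgebraicClosure K ⊗[K] A) ≃ₗ⁅AlgebraicClosure K⁆
        ↥(LieAlgebra.Symplectic.sp (Fin 2) (AlgebraicClosure K)))
    (U V : Submodule K A) :
    Module.finrank K ↥U + Module.finrank K ↥V ≤
      Module.finrank K ↥(bracketSpan U V) + 10 := by
  have h2K : (2 : K) ≠ 0 := Ring.two_ne_zero (by rcases hchar with h | h <;> omega)
  have h2 : (2 : AlgebraicClosure K) ≠ 0 := by
    have h := (map_ne_zero (algebraMap K (AlgebraicClosure K))).2 h2K
    rwa [map_ofNat] at h
  -- Transport a base-changed subspace to `sp₄` along `e`; this preserves the dimension.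
  let T : Submodule K A → Submodule (AlgebraicClosure K) (SpFour.L4 (AlgebraicClosure K)) :=
    fun P => (P.baseChange (AlgebraicClosure K)).map e.toLinearEquiv.toLinearMap
  have hT : ∀ P, Module.finrank (AlgebraicClosure K) (T P) = Module.finrank K P := fun P =>
    (LinearEquiv.finrank_map_eq e.toLinearEquiv _).trans (SpFour.finrank_baseChange P)
  rw [← hT U, ← hT V, ← hT (bracketSpan U V)]
  refine SpFour.finrank_add_le h2 ?_
  rintro _ ⟨u, hu, rfl⟩ _ ⟨v, hv, rfl⟩
  exact ⟨⁅u, v⁆, SpFour.lie_mem_baseChange hu hv, LieEquiv.map_lie e u v⟩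
end
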